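/- arXiv:2301.07353 — 2 statements merged into one kernel-verified Lean document; each statement's English description precedes it below -/
import Mathlib

section
/- Let p and q be finite probability vectors. Suppose that (i) f_α(p) < f_α(q) for all α ∈ (0,1), (ii) H₁(p) < H₁(q), (iii) f_α(p) > f_α(q) for all α ∈ (1,∞), and that in addition either (iv) ‖p‖₀ < ‖q‖₀, or (v) ‖p‖₀ = ‖q‖₀, H'₀(p) < H'₀(q), and f_α(p) > f_α(q) for all α ∈ (−∞,0). Then there exists a finite probability vector r such that p ⊗ r majorizes q ⊗ r. Conversely, if such an r exists, then f_α(p) ≤ f_α(q) for all α ∈ (0,1), H₁(p) ≤ H₁(q), f_α(p) ≥ f_α(q) for all α ∈ (1,∞), ‖p‖₀ ≤ ‖q‖₀, and if ‖p‖₀ = ‖q‖₀ also H'₀(p) ≤ H'₀(q) and f_α(p) ≥ f_α(q) for all α ∈ (−∞,0). -/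
open scoped BigOperators NNReal

noncomputable section

/-- A probability vector on a finite index type. -/
def IsProbVec {ι : Type*} [Fintype ι] (p : ι → ℝ) : Prop :=
  (∀ i, 0 ≤ p i) ∧ ∑ i, p i = 1

/-- A (column-)stochastic matrix: nonnegative entries, every column sums to `1`. -/
def IsStochastic {ι κ : Type*} [Fintype ι] [Fintype κ] (T : ι → κ → ℝ) : Prop :=
  (∀ i j, 0 ≤ T i j) ∧ ∀ j, ∑ i, T i j = 1

/-- Matrix–vector multiplication. -/
def matVec {ι κ : Type*} [Fintype κ] (T : ι → κ → ℝ) (v : κ → ℝ) : ι → ℝ :=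
  fun i => ∑ j, T i j * v j

/-- Kronecker product of two vectors. -/
def kron {ι κ : Type*} (p : ι → ℝ) (q : κ → ℝ) : ι × κ → ℝ :=
  fun x => p x.1 * q x.2

/-- `n`-fold Kronecker power of a vector. -/
def kpow {ι : Type*} (p : ι → ℝ) (n : ℕ) : (Fin n → ι) → ℝ :=
  fun f => ∏ j, p (f j)

/-- Kronecker product reindexed along `Fin (m * n)`. -/
def kronFin {m n : ℕ} (p : Fin m → ℝ) (q : Fin n → ℝ) : Fin (m * n) → ℝ :=
  fun i => kron p q (finProdFinEquiv.symm i)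

/-- The sum of the `k` largest entries of a nonnegative vector, expressed as the
largest sum over subsets of cardinality at most `k`. -/
def topSum {ι : Type*} [Fintype ι] (p : ι → ℝ) (k : ℕ) : ℝ :=
  ⨆ s ∈ {s : Finset ι | s.card ≤ k}, ∑ i ∈ s, p i

/-- Majorization for nonnegative vectors (possibly of different lengths):
equal total sums, and for each `k` the sum of the `k` largest entries of `p` is
at least that of `q`. -/
def Majorizes {ι κ : Type*} [Fintype ι] [Fintype κ] (p : ι → ℝ) (q : κ → ℝ) : Prop :=
  (∑ i, p i = ∑ j, q j) ∧ ∀ k : ℕ, topSum q k ≤ topSum p k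

/-- The size of the support, `‖p‖₀`. -/
def supp0 {ι : Type*} [Fintype ι] (p : ι → ℝ) : ℕ :=
  (Finset.univ.filter fun i => p i ≠ 0).card

/-- Entrywise nonnegativity. -/
def NonnegVec {n : ℕ} (p : Fin n → ℝ) : Prop := ∀ i, 0 ≤ p i

/-- The modified majorization preorder `≽₀,₁`: majorization plus equality of
support sizes. -/
def MajMod {ι κ : Type*} [Fintype ι] [Fintype κ] (p : ι → ℝ) (q : κ → ℝ) : Prop :=
  Majorizes p q ∧ supp0 p = supp0 q

/-- `f_α(p) = ∑_{i ∈ supp p} (p i)^α`. -/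
def fA {ι : Type*} [Fintype ι] (α : ℝ) (p : ι → ℝ) : ℝ :=
  ∑ i, if p i = 0 then 0 else p i ^ α

/-- Shannon entropy (the terms with `p i = 0` vanish). -/
def H1ent {ι : Type*} [Fintype ι] (p : ι → ℝ) : ℝ := -∑ i, p i * Real.log (p i)

/-- `H₀'(p) = ∑_{i ∈ supp p} log p_i`. -/
def H0' {ι : Type*} [Fintype ι] (p : ι → ℝ) : ℝ :=
  ∑ i, if p i = 0 then 0 else Real.log (p i)

/-- Rényi entropy of order `α` (with `α = 1` the Shannon entropy). -/
def Hent {ι : Type*} [Fintype ι] (α : ℝ) (p : ι → ℝ) : ℝ :=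
  if α = 1 then -∑ i, p i * Real.log (p i)
  else (1 / (1 - α)) * Real.log (∑ i, if p i = 0 then 0 else p i ^ α)

/-- Min-entropy `H_∞(p) = - log max_i p_i`. -/
def HentInf {ι : Type*} [Fintype ι] (p : ι → ℝ) : ℝ := -Real.log (⨆ i, p i)

/-- Kullback–Leibler divergence (the terms with `p i = 0` vanish). -/
def KL {n : ℕ} (p q : Fin n → ℝ) : ℝ :=
  ∑ i, p i * Real.log (p i / q i)

/-- Rényi divergence of order `α` for vectors with common support. -/
def Renyi {n : ℕ} (α : ℝ) (p q : Fin n → ℝ) : ℝ :=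
  if α = 1 then ∑ i, p i * Real.log (p i / q i)
  else (1 / (α - 1)) * Real.log (∑ i, if p i = 0 then 0 else p i ^ α * q i ^ (1 - α))

/-- Max-divergence `D_∞(p‖q) = max_{i ∈ supp q} log (p_i / q_i)`. -/
def RenyiInf {n : ℕ} (p q : Fin n → ℝ) : ℝ :=
  ⨆ i ∈ Finset.univ.filter (fun i => q i ≠ 0), Real.log (p i / q i)

/-- Rényi divergence with values in the extended reals `[0, ∞]`. -/
def RenyiE {n : ℕ} (α : ℝ) (p q : Fin n → ℝ) : EReal :=
  if α = 1 then
    (if ∀ i, p i ≠ 0 → q i ≠ 0 then ((∑ i, p i * Real.log (p i / q i) : ℝ) : EReal) else ⊤)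
  else if α < 1 then
    (if ∃ i, p i ≠ 0 ∧ q i ≠ 0 then
      (((1 / (α - 1)) *
        Real.log (∑ i, if p i = 0 ∨ q i = 0 then 0 else p i ^ α * q i ^ (1 - α)) : ℝ) : EReal)
    else (⊤ : EReal))
  else
    (if ∀ i, p i ≠ 0 → q i ≠ 0 then
      (((1 / (α - 1)) *
        Real.log (∑ i, if p i = 0 then 0 else p i ^ α * q i ^ (1 - α)) : ℝ) : EReal)
    else (⊤ : EReal))

/-- The common support of a tuple of vectors. -/
def suppIdx {d n : ℕ} (P : Fin d → Fin n → ℝ) : Finset (Fin n) :=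
  Finset.univ.filter fun i => ∃ k, P k i ≠ 0

/-- `f_α(P) = ∑_{i ∈ I} ∏_k (p_i^{(k)})^{α_k}` with `I` the common support. -/
def fMat {d n : ℕ} (α : Fin d → ℝ) (P : Fin d → Fin n → ℝ) : ℝ :=
  ∑ i ∈ suppIdx P, ∏ k, P k i ^ α k

/-- The matrix `α`-divergence `D_α`. -/
def Dmat {d n : ℕ} (α : Fin d → ℝ) (P : Fin d → Fin n → ℝ) : ℝ :=
  (1 / ((⨆ k, α k) - 1)) * Real.log (∑ i ∈ suppIdx P, ∏ k, P k i ^ α k)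

/-- The tropical matrix divergence `D^𝕋_β`. -/
def DmatT {d n : ℕ} (β : Fin d → ℝ) (P : Fin d → Fin n → ℝ) : ℝ :=
  (1 / (⨆ k, β k)) * Real.log (⨆ i ∈ suppIdx P, ∏ k, P k i ^ β k)

/-- Membership in `A₊`: entries summing to `1`, all nonnegative. -/
def memAplus {d : ℕ} (α : Fin d → ℝ) : Prop := (∑ k, α k = 1) ∧ ∀ k, 0 ≤ α k

/-- Membership in `A₋`: entries summing to `1`, one entry `≥ 1`, the others `≤ 0`. -/
def memAminus {d : ℕ} (α : Fin d → ℝ) : Prop :=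
  (∑ k, α k = 1) ∧ ∃ k, 1 ≤ α k ∧ ∀ l, l ≠ k → α l ≤ 0

/-- Membership in `B₋`: entries summing to `0`, one entry `≥ 0`, the others `≤ 0`. -/
def memBminus {d : ℕ} (β : Fin d → ℝ) : Prop :=
  (∑ k, β k = 0) ∧ ∃ k, 0 ≤ β k ∧ ∀ l, l ≠ k → β l ≤ 0

/-- `α` is none of the standard basis vectors `e₁, …, e_d`. -/
def notBasis {d : ℕ} (α : Fin d → ℝ) : Prop := ∀ k, α ≠ Pi.single k 1

/-- ℓ¹-distance of two vectors, padding with zeros to a common length. -/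
def l1PadDist {m n : ℕ} (p : Fin m → ℝ) (q : Fin n → ℝ) : ℝ :=
  ∑ i : Fin (max m n),
    |(if h : (i : ℕ) < m then p ⟨(i : ℕ), h⟩ else 0) -
      (if h : (i : ℕ) < n then q ⟨(i : ℕ), h⟩ else 0)|

/-- Index type of the direct sum `⨁_{s=0}^{n-1} p^{⊗(n-1-s)} ⊗ q^{⊗s}`. -/
abbrev TrickIdx (m m' n : ℕ) : Type :=
  Σ s : Fin n, (Fin (n - 1 - (s : ℕ)) → Fin m) × (Fin (s : ℕ) → Fin m')

/-- The standard catalyst `(1/n) ⨁_{s=0}^{n-1} p^{⊗(n-1-s)} ⊗ q^{⊗s}`. -/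
def trick {m m' : ℕ} (p : Fin m → ℝ) (q : Fin m' → ℝ) (n : ℕ) : TrickIdx m m' n → ℝ :=
  fun x => (1 / (n : ℝ)) * (kpow p (n - 1 - (x.1 : ℕ)) x.2.1 * kpow q (x.1 : ℕ) x.2.2)

/-- A valid tuple: nonnegative entries and common support across the tuple. -/
def TupOK {d n : ℕ} (P : Fin d → Fin n → ℝ) : Prop :=
  (∀ k i, 0 ≤ P k i) ∧ ∀ k l i, P k i ≠ 0 ↔ P l i ≠ 0

/-- Matrix majorization of tuples: a single stochastic matrix carrying each column
of `P` to the corresponding column of `Q`. -/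
def TupMaj {d m n : ℕ} (P : Fin d → Fin m → ℝ) (Q : Fin d → Fin n → ℝ) : Prop :=
  ∃ T : Fin n → Fin m → ℝ, IsStochastic T ∧ ∀ k, matVec T (P k) = Q k


section KlimeshProof

open Finset in
lemma topSum_ge {ι : Type*} [Fintype ι] (p : ι → ℝ) (k : ℕ) (s : Finset ι) (hs : s.card ≤ k) :
    ∑ i ∈ s, p i ≤ topSum p k := by
  unfold topSum
  have hb : BddAbove (Set.range fun s : Finset ι =>
      ⨆ (_ : s ∈ {s : Finset ι | s.card ≤ k}), ∑ i ∈ s, p i) := (Set.finite_range _).bddAbove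
  refine le_trans ?_ (le_ciSup hb s)
  rw [ciSup_pos (by exact hs)]

lemma topSum_le {ι : Type*} [Fintype ι] (p : ι → ℝ) (k : ℕ) (B : ℝ) (hB : 0 ≤ B)
    (h : ∀ s : Finset ι, s.card ≤ k → ∑ i ∈ s, p i ≤ B) : topSum p k ≤ B := by
  unfold topSum
  refine Real.iSup_le (fun s => Real.iSup_le (fun hs => h s hs) hB) hB

lemma topSum_le_hinge {ι : Type*} [Fintype ι] (p : ι → ℝ) (k : ℕ) (t : ℝ) (ht : 0 ≤ t) :
    topSum p k ≤ k * t + ∑ i, max (p i - t) 0 := by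
  have h0 : 0 ≤ ∑ i, max (p i - t) 0 := Finset.sum_nonneg fun i _ => le_max_right _ _
  refine topSum_le p k _ (by positivity) fun s hs => ?_
  have h1 : ∑ i ∈ s, p i ≤ ∑ i ∈ s, (t + max (p i - t) 0) :=
    Finset.sum_le_sum fun i _ => by linarith [le_max_left (p i - t) 0]
  have h2 : ∑ i ∈ s, max (p i - t) 0 ≤ ∑ i, max (p i - t) 0 :=
    Finset.sum_le_sum_of_subset_of_nonneg (Finset.subset_univ _) fun i _ _ => le_max_right _ _
  rw [Finset.sum_add_distrib, Finset.sum_const, nsmul_eq_mul] at h1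
  have h3 : (s.card : ℝ) * t ≤ k * t := mul_le_mul_of_nonneg_right (by exact_mod_cast hs) ht
  linarith

lemma topSum_attain {ι : Type*} [Fintype ι] (p : ι → ℝ) (hp : ∀ i, 0 ≤ p i) (k : ℕ) :
    ∃ t : ℝ, 0 ≤ t ∧ k * t + ∑ i, max (p i - t) 0 ≤ topSum p k := by
  classical
  by_cases hk : Fintype.card ι ≤ k
  · refine ⟨0, le_rfl, ?_⟩
    have := topSum_ge p k Finset.univ (by simpa using hk)
    have h2 : ∑ i, max (p i - 0) 0 = ∑ i, p i :=
      Finset.sum_congr rfl fun i _ => by simp [hp i]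
    rw [h2]; simpa using this
  · push Not at hk
    set A : Finset ι := Finset.univ.filter fun i => k < (Finset.univ.filter fun j => p i ≤ p j).card
      with hA
    have hne : A.Nonempty := by
      have : (Finset.univ : Finset ι).Nonempty := by
        rw [← Finset.card_pos, Finset.card_univ]; omega
      obtain ⟨i, -, hi⟩ := Finset.exists_min_image Finset.univ p this
      refine ⟨i, ?_⟩
      simp only [hA, Finset.mem_filter, Finset.mem_univ, true_and]
      rw [Finset.filter_true_of_mem (fun j _ => hi j (Finset.mem_univ _))]
      simpa using hk
    obtain ⟨i0, hi0, hmax⟩ := Finset.exists_max_image A p hne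
    set t := p i0 with ht
    have hge : k < (Finset.univ.filter fun j => t ≤ p j).card := by
      simpa [hA] using hi0
    have hgt : (Finset.univ.filter fun j => t < p j).card ≤ k := by
      by_contra hcon
      push Not at hcon
      have hne2 : (Finset.univ.filter fun j => t < p j).Nonempty := by
        rw [← Finset.card_pos]; omega
      obtain ⟨j0, hj0, hmin⟩ := Finset.exists_min_image _ p hne2
      have hj0' : t < p j0 := by simpa using hj0
      have : j0 ∈ A := by
        simp only [hA, Finset.mem_filter, Finset.mem_univ, true_and]
        refine lt_of_lt_of_le hcon (Finset.card_le_card ?_)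
        intro j hj
        have := hmin j hj
        simpa using this
      have := hmax j0 this
      linarith
    obtain ⟨s, hs1, hs2, hs3⟩ := Finset.exists_subsuperset_card_eq
      (s := Finset.univ.filter fun j => t < p j) (t := Finset.univ.filter fun j => t ≤ p j)
      (by intro j hj; simp only [Finset.mem_filter, Finset.mem_univ, true_and] at hj ⊢; exact hj.le)
      hgt hge.le
    refine ⟨t, hp _, ?_⟩
    refine le_trans (le_of_eq ?_) (topSum_ge p k s hs3.le)
    have h1 : ∑ i, max (p i - t) 0 = ∑ i ∈ s, max (p i - t) 0 := by
      symm
      apply Finset.sum_subset (Finset.subset_univ _)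
      intro i _ hi
      have : ¬ t < p i := fun h => hi (hs1 (by simpa using h))
      exact max_eq_right (by linarith)
    have h2 : ∑ i ∈ s, max (p i - t) 0 = ∑ i ∈ s, (p i - t) := by
      refine Finset.sum_congr rfl fun i hi => max_eq_left ?_
      have := hs2 hi
      simp only [Finset.mem_filter, Finset.mem_univ, true_and] at this
      linarith
    rw [h1, h2, Finset.sum_sub_distrib, Finset.sum_const, hs3, nsmul_eq_mul]
    ring

lemma maj_of_hinge {ι κ : Type*} [Fintype ι] [Fintype κ] (p : ι → ℝ) (q : κ → ℝ)
    (hp : ∀ i, 0 ≤ p i) (hq : ∀ i, 0 ≤ q i) (hs : ∑ i, p i = ∑ j, q j)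
    (h : ∀ t : ℝ, 0 < t → ∑ j, max (q j - t) 0 ≤ ∑ i, max (p i - t) 0) : Majorizes p q := by
  refine ⟨hs, fun k => ?_⟩
  obtain ⟨t, ht, h1⟩ := topSum_attain p hp k
  have h2 := topSum_le_hinge q k t ht
  rcases ht.eq_or_lt with rfl | ht
  · have e1 : ∑ i, max (p i - 0) 0 = ∑ i, p i :=
      Finset.sum_congr rfl fun i _ => by simp [hp i]
    have e2 : ∑ i, max (q i - 0) 0 = ∑ i, q i :=
      Finset.sum_congr rfl fun i _ => by simp [hq i]
    rw [e1] at h1; rw [e2] at h2; linarith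
  · have := h t ht
    linarith

lemma hinge_of_maj {ι κ : Type*} [Fintype ι] [Fintype κ] (p : ι → ℝ) (q : κ → ℝ)
    (h : Majorizes p q) (t : ℝ) (ht : 0 < t) :
    ∑ j, max (q j - t) 0 ≤ ∑ i, max (p i - t) 0 := by
  classical
  set s := Finset.univ.filter fun j => t < q j with hs
  have h1 : ∑ i, max (q i - t) 0 = ∑ i ∈ s, (q i - t) := by
    rw [hs, Finset.sum_filter]
    refine Finset.sum_congr rfl fun i _ => ?_
    split_ifs with h
    · exact max_eq_left (by linarith)
    · exact max_eq_right (by linarith)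
  have h2 := topSum_ge q s.card s le_rfl
  have h3 := h.2 s.card
  have h4 := topSum_le_hinge p s.card t ht.le
  rw [h1, Finset.sum_sub_distrib, Finset.sum_const, nsmul_eq_mul]
  linarith

/-- Sum of `g (log p_i)` over the support. -/
def SL {ι : Type*} [Fintype ι] (p : ι → ℝ) (g : ℝ → ℝ) : ℝ :=
  ∑ i, if p i = 0 then 0 else g (Real.log (p i))

lemma SL_fA {ι : Type*} [Fintype ι] (p : ι → ℝ) (hp : ∀ i, 0 ≤ p i) (α : ℝ) :
    fA α p = SL p (fun x => Real.exp (α * x)) := by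
  unfold fA SL
  refine Finset.sum_congr rfl fun i _ => ?_
  split_ifs with h
  · rfl
  · rw [Real.rpow_def_of_pos (lt_of_le_of_ne (hp i) (Ne.symm h)), mul_comm]

lemma SL_sum {ι : Type*} [Fintype ι] (p : ι → ℝ) (hp : ∀ i, 0 ≤ p i) :
    ∑ i, p i = SL p (fun x => Real.exp x) := by
  unfold SL
  refine Finset.sum_congr rfl fun i _ => ?_
  split_ifs with h
  · exact h
  · simp only [Real.exp_log (lt_of_le_of_ne (hp i) (Ne.symm h))]

lemma SL_H1 {ι : Type*} [Fintype ι] (p : ι → ℝ) (hp : ∀ i, 0 ≤ p i) :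
    H1ent p = - SL p (fun x => Real.exp x * x) := by
  unfold SL H1ent
  congr 1
  refine Finset.sum_congr rfl fun i _ => ?_
  split_ifs with h
  · simp [h]
  · simp only [Real.exp_log (lt_of_le_of_ne (hp i) (Ne.symm h))]

lemma SL_H0 {ι : Type*} [Fintype ι] (p : ι → ℝ) :
    H0' p = SL p (fun x => x) := rfl

lemma SL_supp {ι : Type*} [Fintype ι] (p : ι → ℝ) :
    (supp0 p : ℝ) = SL p (fun _ => 1) := by
  unfold supp0 SL
  rw [Finset.card_filter]
  push_cast
  refine Finset.sum_congr rfl fun i _ => ?_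
  by_cases h : p i = 0 <;> simp [h]

lemma SL_hinge {ι : Type*} [Fintype ι] (p : ι → ℝ) (hp : ∀ i, 0 ≤ p i) (y : ℝ) :
    ∑ i, max (p i - Real.exp y) 0 =
      Real.exp y * SL p (fun x => max (Real.exp (x - y) - 1) 0) := by
  unfold SL
  rw [Finset.mul_sum]
  refine Finset.sum_congr rfl fun i _ => ?_
  split_ifs with h
  · rw [h]; simp [Real.exp_nonneg]
  · rw [← mul_zero (Real.exp y), mul_max_of_nonneg _ _ (Real.exp_nonneg y)]
    simp only [mul_zero]
    rw [Real.exp_sub, Real.exp_log (lt_of_le_of_ne (hp i) (Ne.symm h))]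
    congr 1
    field_simp

lemma SL_eq {ι : Type*} [Fintype ι] (p : ι → ℝ) (X : Finset ℝ)
    (hX : ∀ i, p i ≠ 0 → Real.log (p i) ∈ X) (g : ℝ → ℝ) :
    SL p g = ∑ x ∈ X, (SL p (fun z => if z = x then 1 else 0)) * g x := by
  unfold SL
  simp_rw [Finset.sum_mul]
  rw [Finset.sum_comm]
  refine Finset.sum_congr rfl fun i _ => ?_
  split_ifs with h
  · simp
  · simp [hX i h]

lemma exists_signed {ι κ : Type*} [Fintype ι] [Fintype κ] (p : ι → ℝ) (q : κ → ℝ) :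
    ∃ (X : Finset ℝ) (c : ℝ → ℝ), (∀ x ∈ X, c x ≠ 0) ∧
      ∀ g : ℝ → ℝ, SL p g - SL q g = ∑ x ∈ X, c x * g x := by
  classical
  set X0 : Finset ℝ := (Finset.univ.image fun i => Real.log (p i)) ∪
    (Finset.univ.image fun i => Real.log (q i)) with hX0
  set c : ℝ → ℝ := fun x => SL p (fun z => if z = x then 1 else 0) -
    SL q (fun z => if z = x then 1 else 0) with hc
  refine ⟨X0.filter fun x => c x ≠ 0, c, fun x hx => (Finset.mem_filter.1 hx).2, fun g => ?_⟩
  rw [SL_eq p X0 (by intro i _; simp [hX0]), SL_eq q X0 (by intro i _; simp [hX0]),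
    ← Finset.sum_sub_distrib, Finset.sum_filter]
  refine Finset.sum_congr rfl fun x _ => ?_
  split_ifs with h
  · simp only [hc]; ring
  · push Not at h
    rw [← sub_mul]
    change c x * g x = 0
    rw [h, zero_mul]

/-- The signed hinge function. -/
def phi (X : Finset ℝ) (c : ℝ → ℝ) (y : ℝ) : ℝ :=
  ∑ x ∈ X, c x * max (Real.exp (x - y) - 1) 0

lemma phi_continuous (X : Finset ℝ) (c : ℝ → ℝ) : Continuous (phi X c) := by
  unfold phi
  fun_prop

lemma hinge_int (x a b α : ℝ) (hax : a ≤ x) (hxb : x ≤ b) (P : ℝ → ℝ)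
    (hP : ∀ y, HasDerivAt P ((Real.exp (x - y) - 1) * Real.exp (α * y)) y) :
    ∫ y in a..b, max (Real.exp (x - y) - 1) 0 * Real.exp (α * y) = P x - P a := by
  have hc : Continuous fun y => max (Real.exp (x - y) - 1) 0 * Real.exp (α * y) := by fun_prop
  rw [← intervalIntegral.integral_add_adjacent_intervals (b := x)
    (hc.intervalIntegrable _ _) (hc.intervalIntegrable _ _)]
  have h1 : ∫ y in x..b, max (Real.exp (x - y) - 1) 0 * Real.exp (α * y) = 0 := by
    rw [intervalIntegral.integral_congr (g := fun _ => 0)]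
    · simp
    · intro y hy
      rw [Set.uIcc_of_le hxb] at hy
      have : Real.exp (x - y) ≤ 1 := Real.exp_le_one_iff.2 (by linarith [hy.1])
      simp [max_eq_right (show Real.exp (x - y) - 1 ≤ 0 by linarith)]
  have h2 : ∫ y in a..x, max (Real.exp (x - y) - 1) 0 * Real.exp (α * y) =
      ∫ y in a..x, (Real.exp (x - y) - 1) * Real.exp (α * y) := by
    apply intervalIntegral.integral_congr
    intro y hy
    rw [Set.uIcc_of_le hax] at hy
    have : 1 ≤ Real.exp (x - y) := Real.one_le_exp (by linarith [hy.2])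
    simp [max_eq_left (show 0 ≤ Real.exp (x - y) - 1 by linarith)]
  rw [h1, h2, add_zero]
  apply intervalIntegral.integral_eq_sub_of_hasDerivAt (fun y _ => hP y)
  exact Continuous.intervalIntegrable (by fun_prop) _ _

lemma phi_int (X : Finset ℝ) (c : ℝ → ℝ) (a b α : ℝ) :
    ∫ y in a..b, phi X c y * Real.exp (α * y) =
      ∑ x ∈ X, c x * ∫ y in a..b, max (Real.exp (x - y) - 1) 0 * Real.exp (α * y) := by
  unfold phi
  simp_rw [Finset.sum_mul, mul_assoc]
  rw [intervalIntegral.integral_finsetSum]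
  · simp_rw [intervalIntegral.integral_const_mul]
  · intro x _
    exact Continuous.intervalIntegrable (by fun_prop) _ _

lemma hasDerivAt_exp_lin (α y : ℝ) :
    HasDerivAt (fun y => Real.exp (α * y)) (Real.exp (α * y) * α) y := by
  simpa using (((hasDerivAt_id y).const_mul α).exp)

lemma phi_int_ne (X : Finset ℝ) (c : ℝ → ℝ) (a b α : ℝ) (h0 : α ≠ 0) (h1 : α ≠ 1)
    (hX : ∀ x ∈ X, a ≤ x ∧ x ≤ b) (hs : ∑ x ∈ X, c x * Real.exp x = 0) :
    ∫ y in a..b, phi X c y * Real.exp (α * y) =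
      (∑ x ∈ X, c x * Real.exp (α * x)) / (α * (α - 1)) +
        (∑ x ∈ X, c x * 1) * Real.exp (α * a) / α := by
  have h1' : α - 1 ≠ 0 := sub_ne_zero.2 h1
  rw [phi_int]
  have key : ∀ x ∈ X, c x * ∫ y in a..b, max (Real.exp (x - y) - 1) 0 * Real.exp (α * y) =
      c x * Real.exp (α * x) * (1 / (α * (α - 1)))
        - c x * Real.exp x * (Real.exp ((α - 1) * a) / (α - 1))
        + c x * 1 * (Real.exp (α * a) / α) := by
    intro x hx
    rw [hinge_int x a b α (hX x hx).1 (hX x hx).2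
      (fun y => Real.exp x * (Real.exp ((α - 1) * y) / (α - 1)) - Real.exp (α * y) / α)]
    · have : Real.exp (α * x) = Real.exp x * Real.exp ((α - 1) * x) := by
        rw [← Real.exp_add]; ring_nf
      simp only [this]
      field_simp
      ring
    · intro y
      have d := (((hasDerivAt_exp_lin (α - 1) y).div_const (α - 1)).const_mul (Real.exp x)).sub
        ((hasDerivAt_exp_lin α y).div_const α)
      refine HasDerivAt.congr_deriv d (Eq.symm ?_)
      have : Real.exp (x - y) * Real.exp (α * y) = Real.exp x * Real.exp ((α - 1) * y) := by
        rw [← Real.exp_add, ← Real.exp_add]; ring_nf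
      rw [sub_mul, this]
      field_simp
  rw [Finset.sum_congr rfl key, Finset.sum_add_distrib, Finset.sum_sub_distrib,
    ← Finset.sum_mul, ← Finset.sum_mul, ← Finset.sum_mul, hs]
  ring

lemma phi_int_one (X : Finset ℝ) (c : ℝ → ℝ) (a b : ℝ)
    (hX : ∀ x ∈ X, a ≤ x ∧ x ≤ b) (hs : ∑ x ∈ X, c x * Real.exp x = 0) :
    ∫ y in a..b, phi X c y * Real.exp (1 * y) =
      (∑ x ∈ X, c x * (Real.exp x * x)) + (∑ x ∈ X, c x * 1) * Real.exp a := by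
  rw [phi_int]
  have key : ∀ x ∈ X, c x * ∫ y in a..b, max (Real.exp (x - y) - 1) 0 * Real.exp (1 * y) =
      c x * (Real.exp x * x) - c x * Real.exp x * (a + 1) + c x * 1 * Real.exp a := by
    intro x hx
    rw [hinge_int x a b 1 (hX x hx).1 (hX x hx).2
      (fun y => Real.exp x * y - Real.exp y)]
    · ring
    · intro y
      have d := ((hasDerivAt_id y).const_mul (Real.exp x)).sub (Real.hasDerivAt_exp y)
      refine HasDerivAt.congr_deriv d (Eq.symm ?_)
      have : Real.exp (x - y) * Real.exp (1 * y) = Real.exp x := by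
        rw [← Real.exp_add]; ring_nf
      rw [sub_mul, this]
      simp
  rw [Finset.sum_congr rfl key, Finset.sum_add_distrib, Finset.sum_sub_distrib,
    ← Finset.sum_mul, ← Finset.sum_mul, hs]
  ring

lemma phi_int_zero (X : Finset ℝ) (c : ℝ → ℝ) (a b : ℝ)
    (hX : ∀ x ∈ X, a ≤ x ∧ x ≤ b) (hs : ∑ x ∈ X, c x * Real.exp x = 0)
    (hs0 : ∑ x ∈ X, c x * 1 = 0) :
    ∫ y in a..b, phi X c y * Real.exp (0 * y) = - ∑ x ∈ X, c x * x := by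
  rw [phi_int]
  have key : ∀ x ∈ X, c x * ∫ y in a..b, max (Real.exp (x - y) - 1) 0 * Real.exp (0 * y) =
      c x * Real.exp x * Real.exp (-a) - c x * x + c x * 1 * (a - 1) := by
    intro x hx
    rw [hinge_int x a b 0 (hX x hx).1 (hX x hx).2
      (fun y => - (Real.exp x * Real.exp ((-1) * y)) - y)]
    · have : Real.exp x * Real.exp (-1 * x) = 1 := by
        rw [← Real.exp_add]; simp
      simp only [this]
      simp only [neg_one_mul]
      ring
    · intro y
      have d := (((hasDerivAt_exp_lin (-1) y)).const_mul (Real.exp x)).neg.sub (hasDerivAt_id y)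
      refine HasDerivAt.congr_deriv d (Eq.symm ?_)
      rw [Real.exp_sub, neg_one_mul, Real.exp_neg]
      simp
      field_simp
  rw [Finset.sum_congr rfl key, Finset.sum_add_distrib, Finset.sum_sub_distrib,
    ← Finset.sum_mul, ← Finset.sum_mul, hs, hs0]
  ring

lemma phi_low (X : Finset ℝ) (c : ℝ → ℝ) (y : ℝ) (hX : ∀ x ∈ X, y ≤ x)
    (hs : ∑ x ∈ X, c x * Real.exp x = 0) : phi X c y = - ∑ x ∈ X, c x * 1 := by
  unfold phi
  have key : ∀ x ∈ X, c x * max (Real.exp (x - y) - 1) 0 =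
      c x * Real.exp x * Real.exp (-y) - c x * 1 := by
    intro x hx
    have : 1 ≤ Real.exp (x - y) := Real.one_le_exp (by linarith [hX x hx])
    rw [max_eq_left (by linarith), sub_eq_add_neg x y, Real.exp_add]
    ring
  rw [Finset.sum_congr rfl key, Finset.sum_sub_distrib, ← Finset.sum_mul, hs]
  ring

lemma phi_high (X : Finset ℝ) (c : ℝ → ℝ) (y : ℝ) (hX : ∀ x ∈ X, x ≤ y) : phi X c y = 0 := by
  unfold phi
  refine Finset.sum_eq_zero fun x hx => ?_
  have : Real.exp (x - y) ≤ 1 := Real.exp_le_one_iff.2 (by linarith [hX x hx])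
  rw [max_eq_right (by linarith), mul_zero]

lemma count_le (y h u v : ℝ) (hh : 0 < h) (huv : u ≤ v) (n : ℕ) :
    (((Finset.range n).filter fun k : ℕ => u ≤ y + k * h ∧ y + k * h ≤ v).card : ℝ)
      ≤ (v - u) / h + 1 := by
  have h0 : 0 ≤ (v - u) / h := div_nonneg (by linarith) hh.le
  by_cases hv : v < y
  · rw [Finset.filter_false_of_mem]
    · simp; linarith
    · intro k _ hk
      have : 0 ≤ (k : ℝ) * h := by positivity
      linarith [hk.2]
  push Not at hv
  have hsub : ((Finset.range n).filter fun k : ℕ => u ≤ y + k * h ∧ y + k * h ≤ v) ⊆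
      Finset.Icc ⌈(u - y) / h⌉₊ ⌊(v - y) / h⌋₊ := by
    intro k hk
    simp only [Finset.mem_filter] at hk
    rw [Finset.mem_Icc]
    constructor
    · apply Nat.ceil_le.2
      rw [div_le_iff₀ hh]; linarith [hk.2.1]
    · apply Nat.le_floor
      rw [le_div_iff₀ hh]; linarith [hk.2.2]
  have hc := Finset.card_le_card hsub
  rw [Nat.card_Icc] at hc
  have hc' : (((Finset.range n).filter fun k : ℕ => u ≤ y + k * h ∧ y + k * h ≤ v).card : ℝ) ≤
    ((⌊(v - y) / h⌋₊ + 1 - ⌈(u - y) / h⌉₊ : ℕ) : ℝ) := by exact_mod_cast hc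
  refine hc'.trans ?_
  have e1 : (⌊(v - y) / h⌋₊ : ℝ) ≤ (v - y) / h :=
    Nat.floor_le (div_nonneg (by linarith) hh.le)
  have e2 := Nat.le_ceil ((u - y) / h)
  have e3 : (v - u) / h = (v - y) / h - (u - y) / h := by ring
  rcases le_total ⌈(u - y) / h⌉₊ (⌊(v - y) / h⌋₊ + 1) with hle | hle
  · rw [Nat.cast_sub hle]
    push_cast
    linarith
  · rw [Nat.sub_eq_zero_of_le hle]
    simp; linarith

lemma count_ge (y h u v : ℝ) (hh : 0 < h) (huv : u ≤ v) (n : ℕ) (hy : y ≤ u) (hn : v < y + n * h) :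
    (v - u) / h - 1 ≤
    (((Finset.range n).filter fun k : ℕ => u ≤ y + k * h ∧ y + k * h ≤ v).card : ℝ) := by
  have hsub : Finset.Icc ⌈(u - y) / h⌉₊ ⌊(v - y) / h⌋₊ ⊆
      ((Finset.range n).filter fun k : ℕ => u ≤ y + k * h ∧ y + k * h ≤ v) := by
    intro k hk
    rw [Finset.mem_Icc] at hk
    have h1 := Nat.ceil_le.1 hk.1
    have h2 := (Nat.le_floor_iff (div_nonneg (by linarith) hh.le)).1 hk.2
    rw [div_le_iff₀ hh] at h1
    rw [le_div_iff₀ hh] at h2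
    simp only [Finset.mem_filter, Finset.mem_range]
    refine ⟨?_, by linarith, by linarith⟩
    have : (k : ℝ) * h < n * h := by linarith
    exact_mod_cast lt_of_mul_lt_mul_right this hh.le
  have hc := Finset.card_le_card hsub
  rw [Nat.card_Icc] at hc
  have hc' : ((⌊(v - y) / h⌋₊ + 1 - ⌈(u - y) / h⌉₊ : ℕ) : ℝ) ≤
    (((Finset.range n).filter fun k : ℕ => u ≤ y + k * h ∧ y + k * h ≤ v).card : ℝ) := by
    exact_mod_cast hc
  refine le_trans ?_ hc'
  have e1 := Nat.lt_floor_add_one ((v - y) / h)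
  have e2 := Nat.ceil_lt_add_one (a := (u - y) / h) (div_nonneg (by linarith) hh.le)
  have e3 : (v - u) / h = (v - y) / h - (u - y) / h := by ring
  have e4 : ((⌊(v - y) / h⌋₊ + 1 : ℕ) : ℝ) ≤
      ((⌊(v - y) / h⌋₊ + 1 - ⌈(u - y) / h⌉₊ : ℕ) : ℝ) + ⌈(u - y) / h⌉₊ := by
    exact_mod_cast (by omega : ⌊(v - y) / h⌋₊ + 1 ≤
      ⌊(v - y) / h⌋₊ + 1 - ⌈(u - y) / h⌉₊ + ⌈(u - y) / h⌉₊)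
  push_cast at e4
  linarith

lemma right_dom (φ : ℝ → ℝ) (a b δ c C : ℝ) (hδ : 0 < δ) (hab : a + 3 * δ ≤ b) (hc : 0 < c)
    (hC : 0 ≤ C) (hz : ∀ z, z < a ∨ b < z → φ z = 0) (hnn : ∀ z, b - 3 * δ ≤ z → 0 ≤ φ z)
    (hpos : ∀ z, b - 2 * δ ≤ z → z ≤ b - δ → c ≤ φ z) (hlow : ∀ z, -C ≤ φ z) :
    ∃ Θ : ℝ, 0 < Θ ∧ ∀ h, 0 < h → h ≤ δ / 2 → ∀ θ, Θ ≤ θ → ∀ (y : ℝ) (n : ℕ) (v : ℕ → ℝ),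
      b ≤ y + n * h → (∀ k < n, a ≤ y + k * h → y + k * h ≤ b → 1 / 2 ≤ v k ∧ v k ≤ 1) →
      0 ≤ ∑ k ∈ Finset.range n, v k * (φ (y + k * h) * Real.exp (θ * (y + k * h))) := by
  have hba : 0 < b - a := by linarith
  refine ⟨4 * C * (b - a) / (c * δ) / δ + 1, by positivity, ?_⟩
  intro h hh hhδ θ hθ y n v hn hv
  have hθ0 : 0 ≤ θ := le_trans (by positivity) hθ
  by_cases hN : ∃ k ∈ Finset.range n, y + k * h < b - 3 * δ
  swap
  · push Not at hN
    refine Finset.sum_nonneg fun k hk => ?_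
    have h1 := hN k hk
    by_cases hk' : a ≤ y + k * h ∧ y + k * h ≤ b
    · have := hv k (Finset.mem_range.1 hk) hk'.1 hk'.2
      have h2 := hnn _ h1
      have : 0 ≤ v k := by linarith [this.1]
      positivity
    · rw [hz]
      · simp
      · by_contra hcon; push Not at hcon; exact hk' hcon
  obtain ⟨k0, hk0, hk0'⟩ := hN
  have hy : y ≤ b - 3 * δ := by
    have : 0 ≤ (k0 : ℝ) * h := by positivity
    linarith
  set A := c / 2 * Real.exp (θ * (b - 2 * δ)) with hA
  set D := C * Real.exp (θ * (b - 3 * δ)) with hD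
  have hA0 : 0 ≤ A := by positivity
  have hD0 : 0 ≤ D := by positivity
  have hterm : ∀ k ∈ Finset.range n,
      (if b - 2 * δ ≤ y + k * h ∧ y + k * h ≤ b - δ then A else 0) -
      (if a ≤ y + k * h ∧ y + k * h ≤ b - 3 * δ then D else 0) ≤
        v k * (φ (y + k * h) * Real.exp (θ * (y + k * h))) := by
    intro k hk
    set z := y + k * h with hzdef
    by_cases hzab : a ≤ z ∧ z ≤ b
    · obtain ⟨hv1, hv2⟩ := hv k (Finset.mem_range.1 hk) hzab.1 hzab.2
      by_cases h1 : z < b - 3 * δ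
      · rw [if_neg (by intro hcon; linarith [hcon.1]), if_pos ⟨hzab.1, h1.le⟩]
        have e1 : Real.exp (θ * z) ≤ Real.exp (θ * (b - 3 * δ)) :=
          Real.exp_le_exp.2 (mul_le_mul_of_nonneg_left h1.le hθ0)
        have e2 : -D ≤ φ z * Real.exp (θ * z) := by
          have := mul_le_mul_of_nonneg_right (hlow z) (Real.exp_nonneg (θ * z))
          have := mul_le_mul_of_nonneg_left e1 hC
          rw [hD]; linarith
        rcases le_total 0 (φ z * Real.exp (θ * z)) with h3 | h3
        · have : 0 ≤ v k * (φ z * Real.exp (θ * z)) := mul_nonneg (by linarith) h3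
          linarith
        · nlinarith
      · push Not at h1
        have h2 := hnn z h1
        have h3 : 0 ≤ v k * (φ z * Real.exp (θ * z)) :=
          mul_nonneg (by linarith) (mul_nonneg h2 (Real.exp_nonneg _))
        have hDi : 0 ≤ (if a ≤ z ∧ z ≤ b - 3 * δ then D else 0) := by split_ifs <;> simp [hD0]
        by_cases h4 : b - 2 * δ ≤ z ∧ z ≤ b - δ
        · rw [if_pos h4]
          have e1 : Real.exp (θ * (b - 2 * δ)) ≤ Real.exp (θ * z) :=
            Real.exp_le_exp.2 (mul_le_mul_of_nonneg_left h4.1 hθ0)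
          have e2 : c * Real.exp (θ * (b - 2 * δ)) ≤ φ z * Real.exp (θ * z) :=
            mul_le_mul (hpos z h4.1 h4.2) e1 (Real.exp_nonneg _) h2
          have e3 : 1 / 2 * (c * Real.exp (θ * (b - 2 * δ))) ≤ v k * (φ z * Real.exp (θ * z)) :=
            mul_le_mul hv1 e2 (by positivity) (by linarith)
          have : A = 1 / 2 * (c * Real.exp (θ * (b - 2 * δ))) := by rw [hA]; ring
          linarith
        · rw [if_neg h4]; linarith
    · rw [hz z (by by_contra hcon; push Not at hcon; exact hzab hcon)]
      rw [if_neg (by intro hcon; exact hzab ⟨by linarith [hcon.1], by linarith [hcon.2]⟩),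
        if_neg (by intro hcon; exact hzab ⟨by linarith [hcon.1], by linarith [hcon.2]⟩)]
      simp
  refine le_trans ?_ (Finset.sum_le_sum hterm)
  rw [Finset.sum_sub_distrib, ← Finset.sum_filter, ← Finset.sum_filter, Finset.sum_const,
    Finset.sum_const, nsmul_eq_mul, nsmul_eq_mul]
  have c1 := count_ge y h (b - 2 * δ) (b - δ) hh (by linarith) n (by linarith) (by linarith)
  have c2 := count_le y h a (b - 3 * δ) hh (by linarith) n
  have c1' : δ / (2 * h) ≤ (b - δ - (b - 2 * δ)) / h - 1 := by
    rw [div_le_iff₀ (by positivity)]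
    field_simp
    linarith
  have c2' : (b - 3 * δ - a) / h + 1 ≤ (b - a) / h := by
    rw [le_div_iff₀ hh]
    field_simp
    linarith
  have f1 := mul_le_mul_of_nonneg_right (c1'.trans c1) hA0
  have f2 := mul_le_mul_of_nonneg_right (c2.trans c2') hD0
  have key : (b - a) / h * D ≤ δ / (2 * h) * A := by
    have g1 : 4 * C * (b - a) / (c * δ) ≤ Real.exp (θ * δ) := by
      have : 4 * C * (b - a) / (c * δ) / δ * δ ≤ θ * δ :=
        mul_le_mul_of_nonneg_right (by linarith) hδ.le
      rw [div_mul_cancel₀ _ hδ.ne'] at this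
      linarith [Real.add_one_le_exp (θ * δ)]
    rw [div_le_iff₀ (by positivity)] at g1
    have g2 : Real.exp (θ * (b - 2 * δ)) = Real.exp (θ * δ) * Real.exp (θ * (b - 3 * δ)) := by
      rw [← Real.exp_add]; ring_nf
    have g3 : δ / (2 * h) * A - (b - a) / h * D =
      (Real.exp (θ * δ) * (c * δ) - 4 * C * (b - a)) * Real.exp (θ * (b - 3 * δ)) / (4 * h) := by
      rw [hA, hD, g2]; field_simp; ring
    have : 0 ≤ δ / (2 * h) * A - (b - a) / h * D := by
      rw [g3]
      exact div_nonneg (mul_nonneg (by linarith) (Real.exp_nonneg _)) (by positivity)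
    linarith
  linarith

lemma left_dom (φ : ℝ → ℝ) (a b δ c C : ℝ) (hδ : 0 < δ) (hab : a + 3 * δ ≤ b) (hc : 0 < c)
    (hC : 0 ≤ C) (hz : ∀ z, z < a ∨ b < z → φ z = 0) (hnn : ∀ z, z ≤ a + 3 * δ → 0 ≤ φ z)
    (hpos : ∀ z, a + δ ≤ z → z ≤ a + 2 * δ → c ≤ φ z) (hlow : ∀ z, -C ≤ φ z) :
    ∃ Θ : ℝ, 0 < Θ ∧ ∀ h, 0 < h → h ≤ δ / 2 → ∀ θ, θ ≤ -Θ → ∀ (y : ℝ) (n : ℕ) (v : ℕ → ℝ),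
      y ≤ a → (∀ k < n, a ≤ y + k * h → y + k * h ≤ b → 1 / 2 ≤ v k ∧ v k ≤ 1) →
      0 ≤ ∑ k ∈ Finset.range n, v k * (φ (y + k * h) * Real.exp (θ * (y + k * h))) := by
  obtain ⟨Θ, hΘ, H⟩ := right_dom (fun z => φ (-z)) (-b) (-a) δ c C hδ (by linarith) hc hC
    (fun z h => hz _ (by rcases h with h | h; right; linarith; left; linarith))
    (fun z h => hnn _ (by linarith)) (fun z h1 h2 => hpos _ (by linarith) (by linarith))
    (fun z => hlow _)
  refine ⟨Θ, hΘ, ?_⟩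
  intro h hh hhδ θ hθ y n v hy hv
  have hcast : ∀ k < n, ((n - 1 - k : ℕ) : ℝ) = n - 1 - k := by
    intro k hk
    rw [Nat.cast_sub (by omega), Nat.cast_sub (by omega)]; simp
  have := H h hh hhδ (-θ) (by linarith) (-(y + (n - 1) * h)) n (fun k => v (n - 1 - k))
    (by linarith) (by
      intro k hk h1 h2
      have := hcast k hk
      apply hv _ (by omega)
      · rw [this]; linarith
      · rw [this]; linarith)
  rw [← Finset.sum_range_reflect]
  refine this.trans (le_of_eq (Finset.sum_congr rfl fun k hk => ?_))
  have e := hcast k (Finset.mem_range.1 hk)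
  have e2 : y + ((n - 1 - k : ℕ) : ℝ) * h = -(-(y + (n - 1) * h) + k * h) := by rw [e]; ring
  rw [e2]
  simp only [neg_mul, mul_neg]

lemma riemann (φ : ℝ → ℝ) (hφ : Continuous φ) (a b : ℝ) (hab : a < b)
    (hz : ∀ z, z < a ∨ b < z → φ z = 0) (Θ γ : ℝ) (hγ : 0 < γ) :
    ∃ h0 : ℝ, 0 < h0 ∧ ∀ h, 0 < h → h ≤ h0 → ∀ θ, |θ| ≤ Θ → ∀ (y : ℝ) (n : ℕ),
      y ≤ a → b ≤ y + n * h →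
      |h * ∑ k ∈ Finset.range n, φ (y + k * h) * Real.exp (θ * (y + k * h)) -
        ∫ z in a..b, φ z * Real.exp (θ * z)| ≤ γ := by
  set S : Set (ℝ × ℝ) := Set.Icc (-Θ) Θ ×ˢ Set.Icc (a - 1) (b + 1) with hS
  have hSc : IsCompact S := isCompact_Icc.prod isCompact_Icc
  set F : ℝ × ℝ → ℝ := fun w => φ w.2 * Real.exp (w.1 * w.2) with hF
  have hFc : Continuous F := by fun_prop
  have huc := hSc.uniformContinuousOn_of_continuous hFc.continuousOn
  set ω : ℝ := γ / (b - a + 2) with hω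
  have hω0 : 0 < ω := div_pos hγ (by linarith)
  obtain ⟨d, hd, hdF⟩ := Metric.uniformContinuousOn_iff.1 huc ω hω0
  refine ⟨min 1 (d / 2), lt_min one_pos (by linarith), ?_⟩
  intro h hh hh0 θ hθ y n hy hn
  have hh1 : h ≤ 1 := hh0.trans (min_le_left _ _)
  have hhd : h ≤ d / 2 := hh0.trans (min_le_right _ _)
  set f : ℝ → ℝ := fun z => φ z * Real.exp (θ * z) with hf
  have hfc : Continuous f := by fun_prop
  have hfz : ∀ z, z < a ∨ b < z → f z = 0 := fun z h => by simp [hf, hz z h]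
  have hfa : ∀ z, z ≤ a → f z = 0 := by
    have hcl : IsClosed {z | f z = 0} := isClosed_eq hfc continuous_const
    intro z hz'
    have : closure (Set.Iio a) ⊆ {z | f z = 0} :=
      hcl.closure_subset_iff.2 (fun z hz => hfz z (Or.inl hz))
    rw [closure_Iio] at this
    exact this hz'
  have hfb : ∀ z, b ≤ z → f z = 0 := by
    have hcl : IsClosed {z | f z = 0} := isClosed_eq hfc continuous_const
    intro z hz'
    have : closure (Set.Ioi b) ⊆ {z | f z = 0} :=
      hcl.closure_subset_iff.2 (fun z hz => hfz z (Or.inr hz))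
    rw [closure_Ioi] at this
    exact this hz'
  have hi : ∀ u v, IntervalIntegrable f MeasureTheory.volume u v :=
    fun u v => hfc.intervalIntegrable u v
  have hintg : ∫ z in a..b, f z =
      ∑ k ∈ Finset.range n, ∫ z in (y + k * h)..(y + (k + 1 : ℕ) * h), f z := by
    rw [intervalIntegral.sum_integral_adjacent_intervals (a := fun k : ℕ => y + k * h)
      (fun k _ => hi _ _)]
    have s1 := intervalIntegral.integral_add_adjacent_intervals (hi (y + (0 : ℕ) * h) a)
      (hi a (y + n * h))
    have s2 := intervalIntegral.integral_add_adjacent_intervals (hi a b) (hi b (y + n * h))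
    have e1 : ∫ z in (y + (0 : ℕ) * h)..a, f z = 0 := by
      rw [intervalIntegral.integral_congr (g := fun _ => 0)]
      · simp
      · intro z hz'
        rw [Set.uIcc_of_le (by simpa using hy)] at hz'
        exact hfa z hz'.2
    have e2 : ∫ z in b..(y + n * h), f z = 0 := by
      rw [intervalIntegral.integral_congr (g := fun _ => 0)]
      · simp
      · intro z hz'
        rw [Set.uIcc_of_le hn] at hz'
        exact hfb z hz'.1
    linarith
  change |h * ∑ k ∈ Finset.range n, f (y + k * h) - ∫ z in a..b, f z| ≤ γ
  rw [hintg, Finset.mul_sum, ← Finset.sum_sub_distrib]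
  refine (Finset.abs_sum_le_sum_abs _ _).trans ?_
  have hterm : ∀ k ∈ Finset.range n,
      |h * f (y + k * h) - ∫ z in (y + k * h)..(y + (k + 1 : ℕ) * h), f z| ≤
      if a - h ≤ y + k * h ∧ y + k * h ≤ b then h * ω else 0 := by
    intro k _
    set z0 := y + k * h with hz0
    have hz1 : y + (k + 1 : ℕ) * h = z0 + h := by push_cast; ring
    rw [hz1]
    have e : h * f z0 - ∫ z in z0..(z0 + h), f z = ∫ z in z0..(z0 + h), (f z0 - f z) := by
      rw [intervalIntegral.integral_sub (by simp) (hi _ _)]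
      simp
    rw [e]
    have hb : ∀ z ∈ Set.uIoc z0 (z0 + h), ‖f z0 - f z‖ ≤
        if a - h ≤ z0 ∧ z0 ≤ b then ω else 0 := by
      intro z hz'
      rw [Set.uIoc_of_le (by linarith)] at hz'
      split_ifs with hc
      · have := hdF (θ, z0) ⟨abs_le.1 hθ, by constructor <;> linarith⟩ (θ, z)
          ⟨abs_le.1 hθ, by constructor <;> linarith [hz'.1, hz'.2]⟩ (by
            rw [Prod.dist_eq]
            simp only [dist_self]
            rw [max_eq_right dist_nonneg, Real.dist_eq, abs_sub_comm, abs_of_pos (by linarith [hz'.1])]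
            linarith [hz'.2])
        rw [Real.dist_eq] at this
        exact this.le
      · by_cases h1 : z0 < a - h
        · rw [hfa z0 (by linarith), hfa z (by linarith [hz'.2])]; simp
        · have h2 : b < z0 := by
            by_contra h3; push Not at h1 h3; exact hc ⟨h1, h3⟩
          rw [hfb z0 h2.le, hfb z (by linarith [hz'.1])]; simp
    have := intervalIntegral.norm_integral_le_of_norm_le_const hb
    rw [Real.norm_eq_abs] at this
    refine this.trans (le_of_eq ?_)
    rw [show z0 + h - z0 = h by ring, abs_of_pos hh]
    split_ifs <;> ring
  refine (Finset.sum_le_sum hterm).trans ?_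
  rw [← Finset.sum_filter, Finset.sum_const, nsmul_eq_mul]
  have hc := count_le y h (a - h) b hh (by linarith) n
  refine (mul_le_mul_of_nonneg_right hc (by positivity)).trans ?_
  have : ((b - (a - h)) / h + 1) * (h * ω) = (b - a + 2 * h) * ω := by
    field_simp; ring
  rw [this]
  have : (b - a + 2 * h) * ω ≤ (b - a + 2) * ω := mul_le_mul_of_nonneg_right (by linarith) hω0.le
  refine this.trans (le_of_eq ?_)
  rw [hω]
  have : b - a + 2 ≠ 0 := by linarith
  field_simp

lemma laplace_continuous (φ : ℝ → ℝ) (hφ : Continuous φ) (a b : ℝ) :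
    Continuous fun θ : ℝ => ∫ z in a..b, φ z * Real.exp (θ * z) := by
  apply intervalIntegral.continuous_parametric_intervalIntegral_of_continuous'
  simp only [Function.uncurry_def]
  fun_prop

/-- Main analytic lemma with explicit constants. -/
lemma core (φ : ℝ → ℝ) (hφ : Continuous φ) (a b δ c C : ℝ) (hδ : 0 < δ) (hab : a + 3 * δ ≤ b)
    (hc : 0 < c) (hC : 0 ≤ C) (hz : ∀ z, z < a ∨ b < z → φ z = 0)
    (hnn : ∀ z, z ≤ a + 3 * δ ∨ b - 3 * δ ≤ z → 0 ≤ φ z)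
    (hpos1 : ∀ z, a + δ ≤ z → z ≤ a + 2 * δ → c ≤ φ z)
    (hpos2 : ∀ z, b - 2 * δ ≤ z → z ≤ b - δ → c ≤ φ z) (hbd : ∀ z, |φ z| ≤ C)
    (hL : ∀ θ : ℝ, 0 < ∫ z in a..b, φ z * Real.exp (θ * z)) :
    ∃ (h η Θ : ℝ), 0 < h ∧ 0 < η ∧ η ≤ 1 / 2 ∧ 0 < Θ ∧
      ∀ (θ y : ℝ) (n : ℕ) (v : ℕ → ℝ),
      (∀ k < n, a ≤ y + k * h → y + k * h ≤ b → 1 - η ≤ v k ∧ v k ≤ 1) →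
      (θ ≤ Θ → y ≤ a) → (-Θ ≤ θ → b ≤ y + n * h) →
      0 ≤ ∑ k ∈ Finset.range n, v k * (φ (y + k * h) * Real.exp (θ * (y + k * h))) := by
  obtain ⟨Θ1, hΘ1, H1⟩ := right_dom φ a b δ c C hδ hab hc hC hz (fun z h => hnn z (Or.inr h)) hpos2
    (fun z => (abs_le.1 (hbd z)).1)
  obtain ⟨Θ2, hΘ2, H2⟩ := left_dom φ a b δ c C hδ hab hc hC hz (fun z h => hnn z (Or.inl h)) hpos1
    (fun z => (abs_le.1 (hbd z)).1)
  set Θ := max Θ1 Θ2 with hΘ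
  have hΘ0 : 0 < Θ := lt_of_lt_of_le hΘ1 (le_max_left _ _)
  obtain ⟨θm, hθm, hmin⟩ := (isCompact_Icc (a := -Θ) (b := Θ)).exists_isMinOn
    ⟨0, by constructor <;> linarith⟩ (laplace_continuous φ hφ a b).continuousOn
  set c0 := ∫ z in a..b, φ z * Real.exp (θm * z) with hc0
  have hc0p : 0 < c0 := hL θm
  obtain ⟨h0, hh0, HR⟩ := riemann φ hφ a b (by linarith) hz Θ (c0 / 2) (by linarith)
  set h := min h0 (δ / 2) with hhdef
  have hh : 0 < h := lt_min hh0 (by linarith)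
  have hhδ : h ≤ δ / 2 := min_le_right _ _
  set B := |a| + |b| with hB
  have hB0 : 0 ≤ B := by positivity
  set C' := C * Real.exp (Θ * B) with hC'
  have hC'0 : 0 ≤ C' := by positivity
  set E := (C' + 1) * (b - a + h) with hE
  have hE0 : 0 < E := mul_pos (by linarith) (by linarith)
  refine ⟨h, min (1 / 2) (c0 / 2 / E), Θ, hh, lt_min (by norm_num) (by positivity),
    min_le_left _ _, hΘ0, ?_⟩
  intro θ y n v hv hy hn
  have hη1 : min (1 / 2) (c0 / 2 / E) ≤ 1 / 2 := min_le_left _ _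
  have hη2 : min (1 / 2) (c0 / 2 / E) ≤ c0 / 2 / E := min_le_right _ _
  have hη0 : 0 < min (1 / 2) (c0 / 2 / E) := lt_min (by norm_num) (by positivity)
  set η := min (1 / 2) (c0 / 2 / E) with hη
  have hv' : ∀ k < n, a ≤ y + k * h → y + k * h ≤ b → 1 / 2 ≤ v k ∧ v k ≤ 1 := by
    intro k hk h1 h2
    have := hv k hk h1 h2
    exact ⟨by linarith [this.1], this.2⟩
  by_cases hθ1 : Θ ≤ θ
  · exact H1 h hh hhδ θ (le_trans (le_max_left _ _) hθ1) y n v (hn (by linarith)) hv'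
  by_cases hθ2 : θ ≤ -Θ
  · exact H2 h hh hhδ θ (by linarith [le_max_right Θ1 Θ2]) y n v (hy (by linarith)) hv'
  push Not at hθ1 hθ2
  have hy' := hy hθ1.le
  have hn' := hn hθ2.le
  have hθa : |θ| ≤ Θ := abs_le.2 ⟨hθ2.le, hθ1.le⟩
  have hr := HR h hh (min_le_left _ _) θ hθa y n hy' hn'
  have hm : c0 ≤ ∫ z in a..b, φ z * Real.exp (θ * z) := hmin ⟨hθ2.le, hθ1.le⟩
  have hr1 : c0 / 2 ≤ h * ∑ k ∈ Finset.range n, φ (y + k * h) * Real.exp (θ * (y + k * h)) := by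
    have := (abs_le.1 hr).1
    linarith
  have hterm : ∀ k ∈ Finset.range n,
      φ (y + k * h) * Real.exp (θ * (y + k * h)) -
        (if a ≤ y + k * h ∧ y + k * h ≤ b then η * C' else 0) ≤
      v k * (φ (y + k * h) * Real.exp (θ * (y + k * h))) := by
    intro k hk
    set z := y + k * h with hzdef
    split_ifs with hzab
    · obtain ⟨h1, h2⟩ := hv k (Finset.mem_range.1 hk) hzab.1 hzab.2
      have e1 : |φ z * Real.exp (θ * z)| ≤ C' := by
        rw [abs_mul, abs_of_pos (Real.exp_pos _)]
        refine mul_le_mul (hbd z) (Real.exp_le_exp.2 ?_) (Real.exp_nonneg _) hC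
        refine (le_abs_self _).trans ?_
        rw [abs_mul]
        refine mul_le_mul hθa ?_ (abs_nonneg _) hΘ0.le
        refine abs_le.2 ⟨?_, ?_⟩
        · linarith [neg_abs_le a, abs_nonneg b]
        · linarith [le_abs_self b, abs_nonneg a]
      have e2 := abs_le.1 e1
      have e3 : |(1 - v k) * (φ z * Real.exp (θ * z))| ≤ η * C' := by
        rw [abs_mul]
        exact mul_le_mul (by rw [abs_of_nonneg (by linarith)]; linarith) e1 (abs_nonneg _) hη0.le
      have e4 := (abs_le.1 e3).2
      linarith
    · rw [hz z (by by_contra hcon; push Not at hcon; exact hzab hcon)]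
      simp
  refine le_trans ?_ (Finset.sum_le_sum hterm)
  rw [Finset.sum_sub_distrib, ← Finset.sum_filter, Finset.sum_const, nsmul_eq_mul]
  have hcnt := count_le y h a b hh (by linarith) n
  have k1 := mul_le_mul_of_nonneg_right hcnt (show 0 ≤ η * C' by positivity)
  have k2 : ((b - a) / h + 1) * (η * C') = (b - a + h) * C' * η / h := by field_simp
  have k3 : (b - a + h) * C' * η ≤ c0 / 2 := by
    have : (b - a + h) * C' ≤ E := by rw [hE]; nlinarith
    calc (b - a + h) * C' * η ≤ E * η := mul_le_mul_of_nonneg_right this hη0.le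
      _ ≤ E * (c0 / 2 / E) := mul_le_mul_of_nonneg_left hη2 hE0.le
      _ = c0 / 2 := by field_simp
  have k4 : (b - a + h) * C' * η / h ≤ (c0 / 2) / h := div_le_div_of_nonneg_right k3 hh.le
  have k5 : (c0 / 2) / h ≤ ∑ k ∈ Finset.range n, φ (y + k * h) * Real.exp (θ * (y + k * h)) := by
    rw [div_le_iff₀ hh]; linarith
  linarith

lemma core_weights (φ : ℝ → ℝ) (a b h η Θ : ℝ) (hh : 0 < h) (hη : 0 < η) (hη2 : η ≤ 1 / 2)
    
    (H : ∀ (θ y : ℝ) (n : ℕ) (v : ℕ → ℝ),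
      (∀ k < n, a ≤ y + k * h → y + k * h ≤ b → 1 - η ≤ v k ∧ v k ≤ 1) →
      (θ ≤ Θ → y ≤ a) → (-Θ ≤ θ → b ≤ y + n * h) →
      0 ≤ ∑ k ∈ Finset.range n, v k * (φ (y + k * h) * Real.exp (θ * (y + k * h)))) :
    ∃ (n : ℕ) (w : ℕ → ℕ), (∃ k < n, 0 < w k) ∧
      ∀ y, 0 ≤ ∑ k ∈ Finset.range n, (w k : ℝ) * φ (y + k * h) := by
  set B := |a| + |b| with hB
  have hB0 : 0 ≤ B := by positivity
  set ε := η / 2 / (B ^ 2 + 1) with hε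
  have hε0 : 0 < ε := by positivity
  have hεB : ε * B ^ 2 ≤ η / 2 := by
    rw [hε, div_mul_eq_mul_div, div_le_iff₀ (by positivity)]
    nlinarith
  obtain ⟨K, hK⟩ := exists_nat_ge ((Θ / (2 * ε) + B) / h)
  rw [div_le_iff₀ hh] at hK
  set M := 2 / η * Real.exp (ε * (K * h) ^ 2) with hM
  have hM0 : 0 < M := by positivity
  set X : ℕ → ℝ := fun k => M * Real.exp (-(ε * ((k * h - K * h) ^ 2))) with hX
  have hXlow : ∀ k < 2 * K + 1, 2 / η ≤ X k := by
    intro k hk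
    simp only [hX, hM]
    rw [mul_assoc, ← Real.exp_add]
    have hk' : (k : ℝ) ≤ 2 * K := by exact_mod_cast (by omega : k ≤ 2 * K)
    have : (k * h - K * h) ^ 2 ≤ (K * h) ^ 2 := by
      have : (k * h - K * h) ^ 2 = (k - K) ^ 2 * h ^ 2 := by ring
      rw [this, mul_pow]
      refine mul_le_mul_of_nonneg_right ?_ (by positivity)
      have : (0 : ℝ) ≤ k := by positivity
      nlinarith
    have h1 : 1 ≤ Real.exp (ε * (K * h) ^ 2 + -(ε * ((k * h - K * h) ^ 2))) := by
      apply Real.one_le_exp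
      have := mul_le_mul_of_nonneg_left this hε0.le
      linarith
    have : 0 < 2 / η := by positivity
    nlinarith
  have hη4 : 4 ≤ 2 / η := by rw [le_div_iff₀ hη]; linarith
  refine ⟨2 * K + 1, fun k => ⌊X k⌋₊, ⟨0, by omega, ?_⟩, ?_⟩
  · have := hXlow 0 (by omega)
    exact Nat.floor_pos.2 (by linarith)
  intro y
  set m := y + K * h with hm
  set θ := 2 * ε * m with hθ
  set D : ℝ := M * Real.exp (-(ε * m ^ 2)) with hD
  have hD0 : 0 < D := by positivity
  have hXe : ∀ k, X k = D * Real.exp (θ * (y + k * h)) * Real.exp (-(ε * (y + k * h) ^ 2)) := by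
    intro k
    simp only [hX, hD]
    rw [mul_assoc M, mul_assoc M, ← Real.exp_add, ← Real.exp_add]
    congr 2
    rw [hθ, hm]; ring
  have key := H θ y (2 * K + 1)
    (fun k => (⌊X k⌋₊ : ℝ) / (D * Real.exp (θ * (y + k * h)))) ?_ ?_ ?_
  · have := mul_nonneg hD0.le key
    refine this.trans (le_of_eq ?_)
    rw [Finset.mul_sum]
    refine Finset.sum_congr rfl fun k _ => ?_
    have := Real.exp_pos (θ * (y + k * h))
    field_simp
  · intro k hk h1 h2
    set z := y + k * h with hzd
    have hE : 0 < D * Real.exp (θ * z) := by positivity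
    have hX1 := hXlow k hk
    have hX0 : 0 ≤ X k := by linarith
    have hf1 : (⌊X k⌋₊ : ℝ) ≤ X k := Nat.floor_le hX0
    have hf2 := Nat.lt_floor_add_one (X k)
    have hg : Real.exp (-(ε * z ^ 2)) ≤ 1 := Real.exp_le_one_iff.2 (by
      have : 0 ≤ ε * z ^ 2 := by positivity
      linarith)
    have hzB : |z| ≤ B := by
      refine abs_le.2 ⟨?_, ?_⟩
      · linarith [neg_abs_le a, abs_nonneg b]
      · linarith [le_abs_self b, abs_nonneg a]
    have hz2 : z ^ 2 ≤ B ^ 2 := by rw [← sq_abs]; exact pow_le_pow_left₀ (abs_nonneg _) hzB 2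
    have hg2 : 1 - η / 2 ≤ Real.exp (-(ε * z ^ 2)) := by
      have e1 := Real.add_one_le_exp (-(ε * z ^ 2))
      have e2 := mul_le_mul_of_nonneg_left hz2 hε0.le
      linarith
    have hXz := hXe k
    rw [← hzd] at hXz
    constructor
    · rw [le_div_iff₀ hE]
      have e1 : X k * (1 - η / 2) ≤ ⌊X k⌋₊ := by
        rw [div_le_iff₀ hη] at hX1
        linarith
      have e2 : D * Real.exp (θ * z) * (1 - η / 2) ≤ X k := by
        rw [hXz]; exact mul_le_mul_of_nonneg_left hg2 hE.le
      have e3 := mul_le_mul_of_nonneg_right e2 (show 0 ≤ 1 - η / 2 by linarith)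
      nlinarith [mul_pos hE (mul_pos hη hη)]
    · rw [div_le_one hE]
      refine hf1.trans ?_
      rw [hXz]
      exact mul_le_of_le_one_right hE.le hg
  · intro h1
    have : m ≤ Θ / (2 * ε) := by
      rw [le_div_iff₀ (by positivity)]; linarith
    linarith [neg_abs_le a, abs_nonneg b]
  · intro h1
    have : -(Θ / (2 * ε)) ≤ m := by
      rw [neg_le, le_div_iff₀ (by positivity)]; linarith
    push_cast
    linarith [le_abs_self b, abs_nonneg a]

lemma pos_min (φ : ℝ → ℝ) (hφ : Continuous φ) (u v : ℝ) (huv : u ≤ v)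
    (hp : ∀ z, u ≤ z → z ≤ v → 0 < φ z) : ∃ c, 0 < c ∧ ∀ z, u ≤ z → z ≤ v → c ≤ φ z := by
  obtain ⟨x, hx, hm⟩ := (isCompact_Icc (a := u) (b := v)).exists_isMinOn ⟨u, le_rfl, huv⟩
    hφ.continuousOn
  exact ⟨φ x, hp x hx.1 hx.2, fun z h1 h2 => hm ⟨h1, h2⟩⟩

/-- Main analytic lemma. -/
lemma analytic (φ : ℝ → ℝ) (hφ : Continuous φ) (a b δ : ℝ) (hab : a < b) (hδ : 0 < δ)
    (hz : ∀ z, z ≤ a ∨ b ≤ z → φ z = 0)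
    (hpos1 : ∀ z, a < z → z ≤ a + δ → 0 < φ z)
    (hpos2 : ∀ z, b - δ ≤ z → z < b → 0 < φ z)
    (hL : ∀ θ : ℝ, 0 < ∫ z in a..b, φ z * Real.exp (θ * z)) :
    ∃ (h : ℝ) (n : ℕ) (w : ℕ → ℕ), 0 < h ∧ (∃ k < n, 0 < w k) ∧
      ∀ y, 0 ≤ ∑ k ∈ Finset.range n, (w k : ℝ) * φ (y + k * h) := by
  set d := min δ (b - a) / 3 with hd
  have hd0 : 0 < d := div_pos (lt_min hδ (by linarith)) (by norm_num)
  have hd1 : 3 * d ≤ δ := by have := min_le_left δ (b - a); linarith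
  have hd2 : 3 * d ≤ b - a := by have := min_le_right δ (b - a); linarith
  obtain ⟨c1, hc1, hc1'⟩ := pos_min φ hφ (a + d) (a + 2 * d) (by linarith)
    (fun z h1 h2 => hpos1 z (by linarith) (by linarith))
  obtain ⟨c2, hc2, hc2'⟩ := pos_min φ hφ (b - 2 * d) (b - d) (by linarith)
    (fun z h1 h2 => hpos2 z (by linarith) (by linarith))
  obtain ⟨C, hC⟩ := (isCompact_Icc (a := a) (b := b)).exists_bound_of_continuousOn hφ.continuousOn
  have hC0 : 0 ≤ C := (norm_nonneg _).trans (hC a ⟨le_rfl, hab.le⟩)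
  have hz' : ∀ z, z < a ∨ b < z → φ z = 0 := fun z h =>
    hz z (h.imp le_of_lt le_of_lt)
  obtain ⟨h, η, Θ, hh, hη, hη2, -, H⟩ := core φ hφ a b d (min c1 c2) C hd0 (by linarith)
    (lt_min hc1 hc2) hC0 hz' (by
      intro z hzz
      by_cases hzz2 : z ≤ a ∨ b ≤ z
      · rw [hz z hzz2]
      · push Not at hzz2
        rcases hzz with h | h
        · exact (hpos1 z hzz2.1 (by linarith)).le
        · exact (hpos2 z (by linarith) hzz2.2).le)
    (fun z h1 h2 => (min_le_left _ _).trans (hc1' z h1 h2))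
    (fun z h1 h2 => (min_le_right _ _).trans (hc2' z h1 h2)) (by
      intro z
      by_cases hzz : z < a ∨ b < z
      · rw [hz' z hzz]; simpa using hC0
      · push Not at hzz
        exact hC z hzz) hL
  obtain ⟨n, w, h1, h2⟩ := core_weights φ a b h η Θ hh hη hη2 H
  exact ⟨h, n, w, hh, h1, h2⟩

lemma lead_tendsto (X : Finset ℝ) (c u : ℝ → ℝ) (x0 : ℝ) (hx0 : x0 ∈ X)
    (hlt : ∀ x ∈ X, x ≠ x0 → u x < u x0) :
    Filter.Tendsto (fun α : ℝ => ∑ x ∈ X, c x * Real.exp (α * (u x - u x0))) Filter.atTop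
      (nhds (c x0)) := by
  have : c x0 = ∑ x ∈ X, if x = x0 then c x else 0 := by simp [hx0]
  rw [this]
  refine tendsto_finsetSum _ fun x hx => ?_
  split_ifs with h
  · subst h; simp
  · have h1 : Filter.Tendsto (fun α : ℝ => α * (u x - u x0)) Filter.atTop Filter.atBot :=
      Filter.Tendsto.atTop_mul_const_of_neg (by linarith [hlt x hx h]) Filter.tendsto_id
    simpa using (Real.tendsto_exp_atBot.comp h1).const_mul (c x)

lemma lead_pos (X : Finset ℝ) (c u : ℝ → ℝ) (x0 : ℝ) (hx0 : x0 ∈ X) (hnz : c x0 ≠ 0)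
    (hlt : ∀ x ∈ X, x ≠ x0 → u x < u x0)
    (hL : ∀ α : ℝ, 1 < α → 0 < ∑ x ∈ X, c x * Real.exp (α * u x)) : 0 < c x0 := by
  refine lt_of_le_of_ne (ge_of_tendsto (lead_tendsto X c u x0 hx0 hlt) ?_) (Ne.symm hnz)
  filter_upwards [Filter.eventually_gt_atTop 1] with α hα
  have e : ∑ x ∈ X, c x * Real.exp (α * (u x - u x0)) =
      (∑ x ∈ X, c x * Real.exp (α * u x)) * Real.exp (-(α * u x0)) := by
    rw [Finset.sum_mul]
    refine Finset.sum_congr rfl fun x _ => ?_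
    rw [mul_assoc, ← Real.exp_add]; ring_nf
  rw [e]
  exact (mul_pos (hL α hα) (Real.exp_pos _)).le

lemma gap (Y : Finset ℝ) (b : ℝ) (h : ∀ y ∈ Y, y < b) : ∃ δ, 0 < δ ∧ ∀ y ∈ Y, y ≤ b - δ := by
  rcases Y.eq_empty_or_nonempty with rfl | hne
  · exact ⟨1, one_pos, by simp⟩
  · obtain ⟨m, hm, hmax⟩ := Finset.exists_max_image Y id hne
    exact ⟨b - m, by linarith [h m hm], fun y hy => by have := hmax y hy; simp at this; linarith⟩

lemma gap' (Y : Finset ℝ) (b : ℝ) (h : ∀ y ∈ Y, b < y) : ∃ δ, 0 < δ ∧ ∀ y ∈ Y, b + δ ≤ y := by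
  rcases Y.eq_empty_or_nonempty with rfl | hne
  · exact ⟨1, one_pos, by simp⟩
  · obtain ⟨m, hm, hmax⟩ := Finset.exists_min_image Y id hne
    exact ⟨m - b, by linarith [h m hm], fun y hy => by have := hmax y hy; simp at this; linarith⟩

lemma phi_top (X : Finset ℝ) (c : ℝ → ℝ) (b : ℝ) (hb : b ∈ X) (hmax : ∀ x ∈ X, x ≤ b)
    (hcb : 0 < c b) : ∃ δ, 0 < δ ∧ ∀ z, b - δ ≤ z → z < b → 0 < phi X c z := by
  obtain ⟨δ, hδ, hg⟩ := gap (X.erase b) b (fun y hy =>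
    lt_of_le_of_ne (hmax y (Finset.mem_of_mem_erase hy)) (Finset.ne_of_mem_erase hy))
  refine ⟨δ, hδ, fun z h1 h2 => ?_⟩
  unfold phi
  rw [Finset.sum_eq_single b]
  · have : 1 < Real.exp (b - z) := Real.one_lt_exp_iff.2 (by linarith)
    rw [max_eq_left (by linarith)]
    exact mul_pos hcb (by linarith)
  · intro x hx hxb
    have := hg x (Finset.mem_erase.2 ⟨hxb, hx⟩)
    have : Real.exp (x - z) ≤ 1 := Real.exp_le_one_iff.2 (by linarith)
    rw [max_eq_right (by linarith), mul_zero]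
  · intro h; exact absurd hb h

lemma phi_bot (X : Finset ℝ) (c : ℝ → ℝ) (a : ℝ) (ha : a ∈ X) (hmin : ∀ x ∈ X, a ≤ x)
    (hca : 0 < c a) (hs : ∑ x ∈ X, c x * Real.exp x = 0) (hs0 : ∑ x ∈ X, c x * 1 = 0) :
    ∃ δ, 0 < δ ∧ ∀ z, a < z → z ≤ a + δ → 0 < phi X c z := by
  obtain ⟨δ, hδ, hg⟩ := gap' (X.erase a) a (fun y hy =>
    lt_of_le_of_ne (hmin y (Finset.mem_of_mem_erase hy)) (Finset.ne_of_mem_erase hy).symm)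
  refine ⟨δ, hδ, fun z h1 h2 => ?_⟩
  have key : phi X c z = c a * (1 - Real.exp (a - z)) := by
    unfold phi
    have : ∀ x ∈ X, c x * max (Real.exp (x - z) - 1) 0 = c x * Real.exp x * Real.exp (-z) - c x * 1
        + if x = a then c a * (1 - Real.exp (a - z)) else 0 := by
      intro x hx
      have e : c x * Real.exp x * Real.exp (-z) = c x * Real.exp (x - z) := by
        rw [mul_assoc, ← Real.exp_add]; ring_nf
      rw [e]
      split_ifs with h
      · subst h
        have : Real.exp (x - z) ≤ 1 := Real.exp_le_one_iff.2 (by linarith)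
        rw [max_eq_right (by linarith)]
        ring
      · have := hg x (Finset.mem_erase.2 ⟨h, hx⟩)
        have : 1 ≤ Real.exp (x - z) := Real.one_le_exp (by linarith)
        rw [max_eq_left (by linarith)]
        ring
    rw [Finset.sum_congr rfl this, Finset.sum_add_distrib, Finset.sum_sub_distrib, ← Finset.sum_mul,
      hs, hs0]
    simp [ha]
  rw [key]
  have : Real.exp (a - z) < 1 := Real.exp_lt_one_iff.2 (by linarith)
  exact mul_pos hca (by linarith)

lemma case_eq (X : Finset ℝ) (c : ℝ → ℝ) (hnz : ∀ x ∈ X, c x ≠ 0)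
    (hs : ∑ x ∈ X, c x * Real.exp x = 0)
    (h1 : ∀ α : ℝ, 1 < α → 0 < ∑ x ∈ X, c x * Real.exp (α * x))
    (h01 : ∀ α : ℝ, 0 < α → α < 1 → ∑ x ∈ X, c x * Real.exp (α * x) < 0)
    (hH : 0 < ∑ x ∈ X, c x * (Real.exp x * x))
    (hs0 : ∑ x ∈ X, c x * 1 = 0) (hH0 : ∑ x ∈ X, c x * x < 0)
    (hneg : ∀ α : ℝ, α < 0 → 0 < ∑ x ∈ X, c x * Real.exp (α * x)) :
    ∃ (h : ℝ) (n : ℕ) (w : ℕ → ℕ), 0 < h ∧ (∃ k < n, 0 < w k) ∧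
      ∀ y, 0 ≤ ∑ k ∈ Finset.range n, (w k : ℝ) * phi X c (y + k * h) := by
  have hne : X.Nonempty := by
    rw [Finset.nonempty_iff_ne_empty]; rintro rfl; simp at hH
  obtain ⟨a, ha, hmin⟩ := Finset.exists_min_image X id hne
  obtain ⟨b, hb, hmax⟩ := Finset.exists_max_image X id hne
  simp only [id] at hmin hmax
  have hcb : 0 < c b := lead_pos X c id b hb (hnz b hb)
    (fun x hx hxb => lt_of_le_of_ne (hmax x hx) hxb) h1
  have hca : 0 < c a := lead_pos X c (fun x => -x) a ha (hnz a ha)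
    (fun x hx hxa => neg_lt_neg (lt_of_le_of_ne (hmin x hx) (Ne.symm hxa)))
    (fun α hα => by simpa using hneg (-α) (by linarith))
  have hab : a < b := by
    refine lt_of_le_of_ne (hmin b hb) ?_
    rintro rfl
    have : X = {a} := by
      ext x; simp only [Finset.mem_singleton]
      exact ⟨fun hx => le_antisymm (hmax x hx) (hmin x hx), fun h => h ▸ ha⟩
    rw [this] at hs0
    simp at hs0
    linarith
  obtain ⟨δ1, hδ1, ht⟩ := phi_top X c b hb hmax hcb
  obtain ⟨δ2, hδ2, hbt⟩ := phi_bot X c a ha hmin hca hs hs0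
  have hX : ∀ x ∈ X, a ≤ x ∧ x ≤ b := fun x hx => ⟨hmin x hx, hmax x hx⟩
  refine analytic (phi X c) (phi_continuous X c) a b (min δ1 δ2) hab (lt_min hδ1 hδ2) ?_
    (fun z hz1 hz2 => hbt z hz1 (by linarith [min_le_right δ1 δ2]))
    (fun z hz1 hz2 => ht z (by linarith [min_le_left δ1 δ2]) hz2) ?_
  · rintro z (hz | hz)
    · rw [phi_low X c z (fun x hx => hz.trans (hmin x hx)) hs, hs0, neg_zero]
    · exact phi_high X c z (fun x hx => (hmax x hx).trans hz)
  · intro θ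
    by_cases e0 : θ = 0
    · rw [e0, phi_int_zero X c a b hX hs hs0]; linarith
    by_cases e1 : θ = 1
    · rw [e1, phi_int_one X c a b hX hs, hs0]; linarith
    rw [phi_int_ne X c a b θ e0 e1 hX hs, hs0]
    simp only [zero_mul, zero_div, add_zero]
    rcases lt_or_gt_of_ne e0 with h | h
    · exact div_pos (hneg θ h) (mul_pos_of_neg_of_neg h (by linarith))
    · rcases lt_or_gt_of_ne e1 with h' | h'
      · exact div_pos_of_neg_of_neg (h01 θ h h') (mul_neg_of_pos_of_neg h (by linarith))
      · exact div_pos (h1 θ h') (mul_pos h (by linarith))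


lemma G_mono (φ : ℝ → ℝ) (hφ : Continuous φ) (s b d : ℝ) (hd : 0 < d)
    (hlow : ∀ y, y ≤ s → φ y = d) (θ u v : ℝ) (huv : u ≤ v) (hv : v ≤ s) :
    ∫ y in v..b, φ y * Real.exp (θ * y) ≤ ∫ y in u..b, φ y * Real.exp (θ * y) := by
  have hc : Continuous fun y => φ y * Real.exp (θ * y) := by fun_prop
  rw [← intervalIntegral.integral_add_adjacent_intervals (a := u) (b := v)
    (hc.intervalIntegrable _ _) (hc.intervalIntegrable _ _)]
  have : 0 ≤ ∫ y in u..v, φ y * Real.exp (θ * y) := by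
    refine intervalIntegral.integral_nonneg huv fun y hy => ?_
    rw [hlow y (hy.2.trans hv)]
    positivity
  linarith

lemma G_neg (φ : ℝ → ℝ) (hφ : Continuous φ) (s b d : ℝ) (hsb : s ≤ b) (hd : 0 < d)
    (hlow : ∀ y, y ≤ s → φ y = d) :
    ∃ N : ℕ, ∀ θ : ℝ, θ ≤ 0 → 0 < ∫ y in (s - N)..b, φ y * Real.exp (θ * y) := by
  obtain ⟨C, hC⟩ := (isCompact_Icc (a := s) (b := b)).exists_bound_of_continuousOn hφ.continuousOn
  have hC0 : 0 ≤ C := (norm_nonneg _).trans (hC s ⟨le_rfl, hsb⟩)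
  obtain ⟨N, hN⟩ := exists_nat_gt (C * (b - s) / d)
  rw [div_lt_iff₀ hd] at hN
  refine ⟨N, fun θ hθ => ?_⟩
  have hc : Continuous fun y => φ y * Real.exp (θ * y) := by fun_prop
  rw [← intervalIntegral.integral_add_adjacent_intervals (a := s - N) (b := s)
    (hc.intervalIntegrable _ _) (hc.intervalIntegrable _ _)]
  have hN0 : (0 : ℝ) ≤ N := N.cast_nonneg
  have e1 : ∫ _ in (s - N)..s, d * Real.exp (θ * s) ≤ ∫ y in (s - N)..s, φ y * Real.exp (θ * y) := by
    refine intervalIntegral.integral_mono_on (by linarith) (by simp)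
      (hc.intervalIntegrable _ _) fun y hy => ?_
    rw [hlow y hy.2]
    have : Real.exp (θ * s) ≤ Real.exp (θ * y) := Real.exp_le_exp.2 (by nlinarith [hy.2])
    gcongr
  have e2 : ∫ _ in s..b, -C * Real.exp (θ * s) ≤ ∫ y in s..b, φ y * Real.exp (θ * y) := by
    refine intervalIntegral.integral_mono_on hsb (by simp)
      (hc.intervalIntegrable _ _) fun y hy => ?_
    have h1 : Real.exp (θ * y) ≤ Real.exp (θ * s) := Real.exp_le_exp.2 (by nlinarith [hy.1])
    have h2 := (abs_le.1 (hC y hy)).1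
    have h3 := Real.exp_pos (θ * y)
    nlinarith
  simp only [intervalIntegral.integral_const, smul_eq_mul] at e1 e2
  have h3 := Real.exp_pos (θ * s)
  have : 0 < (N * d - C * (b - s)) * Real.exp (θ * s) := mul_pos (by linarith) h3
  nlinarith

lemma G_pt (X : Finset ℝ) (c : ℝ → ℝ) (s b : ℝ) (hX : ∀ x ∈ X, s ≤ x ∧ x ≤ b)
    (hs : ∑ x ∈ X, c x * Real.exp x = 0)
    (h1 : ∀ α : ℝ, 1 < α → 0 < ∑ x ∈ X, c x * Real.exp (α * x))
    (h01 : ∀ α : ℝ, 0 < α → α < 1 → ∑ x ∈ X, c x * Real.exp (α * x) < 0)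
    (hH : 0 < ∑ x ∈ X, c x * (Real.exp x * x)) (θ : ℝ) (hθ : 0 < θ) :
    ∃ N : ℕ, 0 < ∫ y in (s - N)..b, phi X c y * Real.exp (θ * y) := by
  have hX' : ∀ N : ℕ, ∀ x ∈ X, s - N ≤ x ∧ x ≤ b := fun N x hx =>
    ⟨by linarith [(hX x hx).1, N.cast_nonneg (α := ℝ)], (hX x hx).2⟩
  have hlim : Filter.Tendsto (fun N : ℕ => Real.exp (θ * (s - N))) Filter.atTop (nhds 0) := by
    refine Real.tendsto_exp_atBot.comp ?_
    refine Filter.Tendsto.const_mul_atBot hθ ?_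
    simp only [sub_eq_add_neg]
    exact Filter.tendsto_atBot_add_const_left _ _
      (Filter.tendsto_neg_atTop_atBot.comp tendsto_natCast_atTop_atTop)
  obtain ⟨A, B, hA, hf⟩ : ∃ A B : ℝ, 0 < A ∧ ∀ N : ℕ,
      ∫ y in (s - N)..b, phi X c y * Real.exp (θ * y) = A + B * Real.exp (θ * (s - N)) := by
    by_cases e1 : θ = 1
    · refine ⟨_, ∑ x ∈ X, c x * 1, hH, fun N => ?_⟩
      rw [e1, phi_int_one X c _ b (hX' N) hs, one_mul]
    · refine ⟨(∑ x ∈ X, c x * Real.exp (θ * x)) / (θ * (θ - 1)), (∑ x ∈ X, c x * 1) / θ, ?_,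
        fun N => ?_⟩
      · rcases lt_or_gt_of_ne e1 with h' | h'
        · exact div_pos_of_neg_of_neg (h01 θ hθ h') (mul_neg_of_pos_of_neg hθ (by linarith))
        · exact div_pos (h1 θ h') (mul_pos hθ (by linarith))
      · rw [phi_int_ne X c _ b θ hθ.ne' e1 (hX' N) hs]; ring
  have hl2 : Filter.Tendsto (fun N : ℕ => A + B * Real.exp (θ * (s - N))) Filter.atTop (nhds A) := by
    simpa using (hlim.const_mul B).const_add A
  obtain ⟨N, hN⟩ := (hl2.eventually (lt_mem_nhds hA)).exists
  exact ⟨N, by rw [hf]; exact hN⟩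

lemma G_large (X : Finset ℝ) (c : ℝ → ℝ) (s b : ℝ) (hsb : s < b)
    (hX : ∀ x ∈ X, s ≤ x ∧ x ≤ b) (hb : b ∈ X) (hcb : 0 < c b)
    (hs : ∑ x ∈ X, c x * Real.exp x = 0) :
    ∃ Θ : ℝ, ∀ θ, Θ ≤ θ → 0 < ∫ y in s..b, phi X c y * Real.exp (θ * y) := by
  have l1 := lead_tendsto X c id b hb (fun x hx hxb => lt_of_le_of_ne (hX x hx).2 hxb)
  have l2 : Filter.Tendsto (fun θ : ℝ => θ * Real.exp (-(b - s) * θ)) Filter.atTop (nhds 0) := by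
    have := Real.tendsto_pow_mul_exp_neg_atTop_nhds_zero 1
    have h2 := this.comp (Filter.tendsto_id.const_mul_atTop (sub_pos.2 hsb))
    have h3 := h2.const_mul (1 / (b - s))
    rw [mul_zero] at h3
    refine h3.congr fun θ => ?_
    have : b - s ≠ 0 := by linarith
    simp only [Function.comp, id, pow_one]
    field_simp
  have l3 : Filter.Tendsto (fun θ : ℝ => Real.exp (-(b - s) * θ)) Filter.atTop (nhds 0) :=
    Real.tendsto_exp_atBot.comp (Filter.tendsto_id.const_mul_atTop_of_neg (by linarith))
  have l4 := l1.add ((l2.sub l3).const_mul (∑ x ∈ X, c x * 1))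
  simp only [sub_zero, mul_zero, add_zero, id] at l4
  obtain ⟨Θ, hΘ⟩ := Filter.eventually_atTop.1 (l4.eventually (lt_mem_nhds hcb))
  refine ⟨max Θ 2, fun θ hθ => ?_⟩
  have h2 : 2 ≤ θ := (le_max_right _ _).trans hθ
  have h3 := hΘ θ ((le_max_left _ _).trans hθ)
  have h0 : θ ≠ 0 := by linarith
  have h1 : θ - 1 ≠ 0 := by linarith
  rw [phi_int_ne X c s b θ h0 (by linarith) hX hs]
  have e : ∑ x ∈ X, c x * Real.exp (θ * (x - b)) =
      (∑ x ∈ X, c x * Real.exp (θ * x)) * Real.exp (-(θ * b)) := by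
    rw [Finset.sum_mul]
    refine Finset.sum_congr rfl fun x _ => ?_
    rw [mul_assoc, ← Real.exp_add]; ring_nf
  have e' : Real.exp (-(b - s) * θ) = Real.exp (θ * s) * Real.exp (-(θ * b)) := by
    rw [← Real.exp_add]; ring_nf
  rw [e, e'] at h3
  have h4 : 0 < ((∑ x ∈ X, c x * Real.exp (θ * x)) +
      (∑ x ∈ X, c x * 1) * Real.exp (θ * s) * (θ - 1)) * Real.exp (-(θ * b)) := by
    nlinarith
  have h5 := pos_of_mul_pos_left h4 (Real.exp_pos _).le
  have : (∑ x ∈ X, c x * Real.exp (θ * x)) / (θ * (θ - 1)) +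
        (∑ x ∈ X, c x * 1) * Real.exp (θ * s) / θ = ((∑ x ∈ X, c x * Real.exp (θ * x)) +
      (∑ x ∈ X, c x * 1) * Real.exp (θ * s) * (θ - 1)) / (θ * (θ - 1)) := by
    field_simp
  rw [this]
  exact div_pos h5 (mul_pos (by linarith) (by linarith))

lemma case_lt (X : Finset ℝ) (c : ℝ → ℝ) (hnz : ∀ x ∈ X, c x ≠ 0)
    (hs : ∑ x ∈ X, c x * Real.exp x = 0)
    (h1 : ∀ α : ℝ, 1 < α → 0 < ∑ x ∈ X, c x * Real.exp (α * x))
    (h01 : ∀ α : ℝ, 0 < α → α < 1 → ∑ x ∈ X, c x * Real.exp (α * x) < 0)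
    (hH : 0 < ∑ x ∈ X, c x * (Real.exp x * x))
    (hs0 : ∑ x ∈ X, c x * 1 < 0) :
    ∃ (h : ℝ) (n : ℕ) (w : ℕ → ℕ), 0 < h ∧ (∃ k < n, 0 < w k) ∧
      ∀ y, 0 ≤ ∑ k ∈ Finset.range n, (w k : ℝ) * phi X c (y + k * h) := by
  have hne : X.Nonempty := by
    rw [Finset.nonempty_iff_ne_empty]; rintro rfl; simp at hH
  obtain ⟨a, ha, hmin⟩ := Finset.exists_min_image X id hne
  obtain ⟨b, hb, hmax⟩ := Finset.exists_max_image X id hne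
  simp only [id] at hmin hmax
  have hcb : 0 < c b := lead_pos X c id b hb (hnz b hb)
    (fun x hx hxb => lt_of_le_of_ne (hmax x hx) hxb) h1
  obtain ⟨s, hsdef⟩ : ∃ s, s = a - 1 := ⟨_, rfl⟩
  obtain ⟨d, hd⟩ : ∃ d, d = - ∑ x ∈ X, c x * 1 := ⟨_, rfl⟩
  have hd0 : 0 < d := by linarith
  have hsb : s < b := by linarith [hmin b hb]
  have hX : ∀ x ∈ X, s ≤ x ∧ x ≤ b := fun x hx => ⟨by linarith [hmin x hx], hmax x hx⟩
  have hlow : ∀ y, y ≤ s → phi X c y = d := fun y hy => by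
    rw [hd]; exact phi_low X c y (fun x hx => hy.trans (hX x hx).1) hs
  have hφ := phi_continuous X c
  have mono : ∀ θ : ℝ, ∀ N M : ℕ, N ≤ M → ∫ y in (s - N)..b, phi X c y * Real.exp (θ * y) ≤
      ∫ y in (s - M)..b, phi X c y * Real.exp (θ * y) := fun θ N M hNM =>
    G_mono _ hφ s b d hd0 hlow θ _ _ (by have : (N : ℝ) ≤ M := by exact_mod_cast hNM
                                         linarith)
      (by linarith [N.cast_nonneg (α := ℝ)])
  obtain ⟨N1, hN1⟩ := G_neg _ hφ s b d hsb.le hd0 hlow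
  obtain ⟨Θ, hΘ⟩ := G_large X c s b hsb hX hb hcb hs
  obtain ⟨N2, hN2⟩ := (isCompact_Icc (a := (0 : ℝ)) (b := Θ)).elim_directed_cover
    (fun N : ℕ => {θ : ℝ | 0 < ∫ y in (s - N)..b, phi X c y * Real.exp (θ * y)})
    (fun N => isOpen_lt continuous_const (laplace_continuous _ hφ _ _))
    (fun θ hθ => by
      rw [Set.mem_iUnion]
      rcases hθ.1.eq_or_lt with h | h
      · exact ⟨N1, hN1 θ h.symm.le⟩
      · exact G_pt X c s b hX hs h1 h01 hH θ h)
    (Monotone.directed_le (fun N M hNM θ hθ => lt_of_lt_of_le hθ (mono θ N M hNM)))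
  obtain ⟨N, hN⟩ : ∃ N : ℕ, ∀ θ : ℝ, 0 < ∫ y in (s - N)..b, phi X c y * Real.exp (θ * y) := by
    refine ⟨max N1 N2, fun θ => ?_⟩
    rcases le_total θ 0 with h | h
    · exact (hN1 θ h).trans_le (mono _ _ _ (le_max_left _ _))
    rcases le_total θ Θ with h' | h'
    · have h4 : 0 < ∫ y in (s - N2)..b, phi X c y * Real.exp (θ * y) := hN2 ⟨h, h'⟩
      exact h4.trans_le (mono _ _ _ (le_max_right _ _))
    · have := mono θ 0 (max N1 N2) (Nat.zero_le _)
      rw [Nat.cast_zero, sub_zero] at this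
      exact (hΘ θ h').trans_le this
  obtain ⟨t, ht⟩ : ∃ t, t = s - (N : ℝ) := ⟨_, rfl⟩
  rw [← ht] at hN
  have hts : t ≤ s := by linarith [N.cast_nonneg (α := ℝ)]
  obtain ⟨ψ, hψ⟩ : ∃ ψ : ℝ → ℝ, ψ = fun y => phi X c y - d * max 0 (min 1 (t - y)) := ⟨_, rfl⟩
  have hψc : Continuous ψ := by rw [hψ]; fun_prop
  have hψt : ∀ y, t ≤ y → ψ y = phi X c y := fun y hy => by
    rw [hψ]; simp only
    rw [max_eq_left ((min_le_right _ _).trans (by linarith))]; ring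
  have hψm : ∀ y, t - 1 ≤ y → y ≤ t → ψ y = d * (1 - (t - y)) := fun y hy hy2 => by
    rw [hψ]; simp only
    rw [hlow y (by linarith), min_eq_right (by linarith), max_eq_right (by linarith)]; ring
  have hψl : ∀ y, y ≤ t - 1 → ψ y = 0 := fun y hy => by
    rw [hψ]; simp only
    rw [hlow y (by linarith), min_eq_left (by linarith), max_eq_right (by linarith)]; ring
  obtain ⟨δ, hδ, htop⟩ := phi_top X c b hb hmax hcb
  have main := analytic ψ hψc (t - 1) b (min 1 (min δ (b - s))) (by linarith)
    (lt_min one_pos (lt_min hδ (by linarith))) ?_ ?_ ?_ ?_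
  · obtain ⟨h, n, w, hh, hw, H⟩ := main
    refine ⟨h, n, w, hh, hw, fun y => (H y).trans ?_⟩
    refine Finset.sum_le_sum fun k _ => ?_
    refine mul_le_mul_of_nonneg_left ?_ (Nat.cast_nonneg _)
    rw [hψ]; simp only
    have : 0 ≤ d * max 0 (min 1 (t - (y + k * h))) := mul_nonneg hd0.le (le_max_left _ _)
    linarith
  · rintro z (hz | hz)
    · exact hψl z hz
    · rw [hψt z (by linarith)]
      exact phi_high X c z (fun x hx => (hmax x hx).trans hz)
  · intro z hz1 hz2
    have := min_le_left 1 (min δ (b - s))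
    rw [hψm z (by linarith) (by linarith)]
    exact mul_pos hd0 (by linarith)
  · intro z hz1 hz2
    have := min_le_right 1 (min δ (b - s))
    have h3 := min_le_left δ (b - s)
    have h4 := min_le_right δ (b - s)
    rw [hψt z (by linarith)]
    exact htop z (by linarith) hz2
  · intro θ
    have hc : Continuous fun y => ψ y * Real.exp (θ * y) := by fun_prop
    rw [← intervalIntegral.integral_add_adjacent_intervals (a := t - 1) (b := t)
      (hc.intervalIntegrable _ _) (hc.intervalIntegrable _ _)]
    have e1 : 0 ≤ ∫ y in (t - 1)..t, ψ y * Real.exp (θ * y) := by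
      refine intervalIntegral.integral_nonneg (by linarith) fun y hy => ?_
      rw [hψm y hy.1 hy.2]
      have := hy.1
      exact mul_nonneg (mul_nonneg hd0.le (by linarith)) (Real.exp_pos _).le
    have e2 : ∫ y in t..b, ψ y * Real.exp (θ * y) = ∫ y in t..b, phi X c y * Real.exp (θ * y) := by
      refine intervalIntegral.integral_congr fun y hy => ?_
      rw [Set.uIcc_of_le (by linarith)] at hy
      simp only [hψt y hy.1]
    have := hN θ
    linarith

lemma hinge_kron {m : ℕ} (p : Fin m → ℝ) (hp : ∀ i, 0 ≤ p i) (n : ℕ) (w : ℕ → ℕ) (h Z y : ℝ)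
    (hZ : 0 < Z) (ρ : ℕ) (e : Fin ρ ≃ (Σ k : Fin n, Fin (w k))) :
    ∑ x, max (kron p (fun l => Real.exp (-((e l).1 : ℕ) * h) / Z) x - Real.exp y / Z) 0 =
      Real.exp y / Z * ∑ k ∈ Finset.range n, (w k : ℝ) *
        SL p (fun x => max (Real.exp (x - (y + k * h)) - 1) 0) := by
  rw [Fintype.sum_prod_type_right]
  unfold kron
  simp only
  rw [Equiv.sum_comp e (fun l : (Σ k : Fin n, Fin (w k)) =>
    ∑ i, max (p i * (Real.exp (-(l.1 : ℕ) * h) / Z) - Real.exp y / Z) 0)]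
  rw [Fintype.sum_sigma, Finset.sum_range, Finset.mul_sum]
  refine Finset.sum_congr rfl fun k _ => ?_
  simp only [Finset.sum_const, Finset.card_univ, Fintype.card_fin, nsmul_eq_mul]
  have key : ∑ i, max (p i * (Real.exp (-(k : ℕ) * h) / Z) - Real.exp y / Z) 0 =
      Real.exp (-(k : ℕ) * h) / Z * ∑ i, max (p i - Real.exp (y + (k : ℕ) * h)) 0 := by
    rw [Finset.mul_sum]
    refine Finset.sum_congr rfl fun i _ => ?_
    have hpos : 0 ≤ Real.exp (-(k : ℕ) * h) / Z := by positivity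
    rw [mul_max_of_nonneg _ _ hpos, mul_zero]
    congr 1
    have : Real.exp y = Real.exp (-(k : ℕ) * h) * Real.exp (y + (k : ℕ) * h) := by
      rw [← Real.exp_add]; ring_nf
    rw [this]; ring
  rw [key, SL_hinge p hp, Real.exp_add y]
  have : Real.exp (-(k : ℕ) * h) * Real.exp ((k : ℕ) * h) = 1 := by
    rw [← Real.exp_add]; simp
  calc _ = (w k : ℝ) * (Real.exp y / Z) * (Real.exp (-(k : ℕ) * h) * Real.exp ((k : ℕ) * h)) *
        SL p (fun x => max (Real.exp (x - (y + (k : ℕ) * h)) - 1) 0) := by ring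
    _ = _ := by rw [this]; ring

lemma kron_nonneg {ι κ : Type*} (p : ι → ℝ) (r : κ → ℝ) (hp : ∀ i, 0 ≤ p i) (hr : ∀ i, 0 ≤ r i) :
    ∀ i, 0 ≤ kron p r i := fun i => mul_nonneg (hp _) (hr _)

lemma kron_sum {ι κ : Type*} [Fintype ι] [Fintype κ] (p : ι → ℝ) (r : κ → ℝ) :
    ∑ i, kron p r i = (∑ i, p i) * ∑ i, r i := by
  unfold kron
  rw [Finset.sum_mul_sum, Fintype.sum_prod_type]

lemma catalyst {m m' : ℕ} (p : Fin m → ℝ) (q : Fin m' → ℝ) (hp : IsProbVec p) (hq : IsProbVec q)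
    (X : Finset ℝ) (c : ℝ → ℝ) (hsig : ∀ g : ℝ → ℝ, SL p g - SL q g = ∑ x ∈ X, c x * g x)
    (H : ∃ (h : ℝ) (n : ℕ) (w : ℕ → ℕ), 0 < h ∧ (∃ k < n, 0 < w k) ∧
      ∀ y, 0 ≤ ∑ k ∈ Finset.range n, (w k : ℝ) * phi X c (y + k * h)) :
    ∃ (ρ : ℕ) (r : Fin ρ → ℝ), IsProbVec r ∧ Majorizes (kron p r) (kron q r) := by
  obtain ⟨h, n, w, hh, ⟨k0, hk0, hw⟩, H⟩ := H
  let e := (Fintype.equivFin (Σ k : Fin n, Fin (w k))).symm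
  obtain ⟨Z, hZ⟩ : ∃ Z, Z = ∑ l, Real.exp (-((e l).1 : ℕ) * h) := ⟨_, rfl⟩
  have hZ0 : 0 < Z := by
    rw [hZ]
    refine Finset.sum_pos (fun _ _ => Real.exp_pos _) ?_
    exact ⟨e.symm ⟨⟨k0, hk0⟩, ⟨0, hw⟩⟩, Finset.mem_univ _⟩
  have hr : IsProbVec (fun l => Real.exp (-((e l).1 : ℕ) * h) / Z) := by
    refine ⟨fun l => by positivity, ?_⟩
    rw [← Finset.sum_div, ← hZ, div_self hZ0.ne']
  refine ⟨_, fun l => Real.exp (-((e l).1 : ℕ) * h) / Z, hr, ?_⟩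
  refine maj_of_hinge _ _ (kron_nonneg _ _ hp.1 hr.1) (kron_nonneg _ _ hq.1 hr.1) ?_ ?_
  · rw [kron_sum, kron_sum, hp.2, hq.2]
  · intro t ht
    obtain ⟨y, hy⟩ : ∃ y, t = Real.exp y / Z :=
      ⟨Real.log (t * Z), by rw [Real.exp_log (by positivity)]; field_simp⟩
    rw [hy, hinge_kron p hp.1 n w h Z y hZ0 _ e, hinge_kron q hq.1 n w h Z y hZ0 _ e]
    refine mul_le_mul_of_nonneg_left ?_ (by positivity)
    rw [← sub_nonneg, ← Finset.sum_sub_distrib]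
    refine (H y).trans_eq (Finset.sum_congr rfl fun k _ => ?_)
    rw [← mul_sub, hsig]
    rfl

lemma conv {ι κ : Type*} [Fintype ι] [Fintype κ] (p : ι → ℝ) (q : κ → ℝ)
    (hp : ∀ i, 0 ≤ p i) (hq : ∀ i, 0 ≤ q i) (hm : Majorizes p q) :
    (∀ α : ℝ, 0 < α → α < 1 → fA α p ≤ fA α q) ∧
      H1ent p ≤ H1ent q ∧
      (∀ α : ℝ, 1 < α → fA α q ≤ fA α p) ∧
      supp0 p ≤ supp0 q ∧
      (supp0 p = supp0 q → H0' p ≤ H0' q ∧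
        ∀ α : ℝ, α < 0 → fA α q ≤ fA α p) := by
  obtain ⟨X, c, -, hsig⟩ := exists_signed p q
  have hs : ∑ x ∈ X, c x * Real.exp x = 0 := by
    rw [← hsig, ← SL_sum p hp, ← SL_sum q hq, hm.1, sub_self]
  have hph : ∀ y, 0 ≤ phi X c y := by
    intro y
    have h1 := hinge_of_maj p q hm (Real.exp y) (Real.exp_pos y)
    rw [SL_hinge p hp, SL_hinge q hq] at h1
    have h2 := le_of_mul_le_mul_left h1 (Real.exp_pos y)
    have h3 := hsig (fun x => max (Real.exp (x - y) - 1) 0)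
    unfold phi
    linarith
  obtain ⟨a, ha⟩ := X.finite_toSet.bddBelow
  obtain ⟨b0, hb0⟩ := X.finite_toSet.bddAbove
  obtain ⟨b, hab, hb⟩ : ∃ b, a ≤ b ∧ b0 ≤ b := ⟨max a b0, le_max_left _ _, le_max_right _ _⟩
  have hX : ∀ x ∈ X, a ≤ x ∧ x ≤ b := fun x hx => ⟨ha hx, (hb0 hx).trans hb⟩
  have hX' : ∀ N : ℕ, ∀ x ∈ X, a - N ≤ x ∧ x ≤ b := fun N x hx =>
    ⟨by linarith [(hX x hx).1, N.cast_nonneg (α := ℝ)], (hX x hx).2⟩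
  have hintg : ∀ (N : ℕ) (θ : ℝ), 0 ≤ ∫ y in (a - N)..b, phi X c y * Real.exp (θ * y) := by
    intro N θ
    exact intervalIntegral.integral_nonneg (by linarith [N.cast_nonneg (α := ℝ)])
      fun y _ => mul_nonneg (hph y) (Real.exp_pos _).le
  have hlim : ∀ A B θ : ℝ, 0 < θ → (∀ N : ℕ, 0 ≤ A + B * Real.exp (θ * (a - N))) → 0 ≤ A := by
    intro A B θ hθ h
    have hlim : Filter.Tendsto (fun N : ℕ => Real.exp (θ * (a - N))) Filter.atTop (nhds 0) := by
      refine Real.tendsto_exp_atBot.comp ?_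
      refine Filter.Tendsto.const_mul_atBot hθ ?_
      simp only [sub_eq_add_neg]
      exact Filter.tendsto_atBot_add_const_left _ _
        (Filter.tendsto_neg_atTop_atBot.comp tendsto_natCast_atTop_atTop)
    have hl2 : Filter.Tendsto (fun N : ℕ => A + B * Real.exp (θ * (a - N))) Filter.atTop
        (nhds A) := by
      simpa using (hlim.const_mul B).const_add A
    exact ge_of_tendsto' hl2 h
  have hpos : ∀ α : ℝ, 0 < α → α ≠ 1 → 0 ≤ (∑ x ∈ X, c x * Real.exp (α * x)) / (α * (α - 1)) := by
    intro α h0 h1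
    refine hlim _ ((∑ x ∈ X, c x * 1) / α) α h0 fun N => ?_
    have := hintg N α
    rw [phi_int_ne X c _ b α h0.ne' h1 (hX' N) hs] at this
    refine this.trans_eq ?_
    ring
  have hfA : ∀ α, fA α p - fA α q = ∑ x ∈ X, c x * Real.exp (α * x) := fun α => by
    rw [SL_fA p hp, SL_fA q hq, hsig]
  have hsu : (supp0 p : ℝ) - supp0 q = ∑ x ∈ X, c x * 1 := by
    rw [SL_supp, SL_supp, hsig]
  refine ⟨fun α h0 h1 => ?_, ?_, fun α h1 => ?_, ?_, fun he => ?_⟩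
  · by_contra hcon
    have := hpos α h0 h1.ne
    have h3 : (∑ x ∈ X, c x * Real.exp (α * x)) / (α * (α - 1)) < 0 :=
      div_neg_of_pos_of_neg (by linarith [hfA α]) (mul_neg_of_pos_of_neg h0 (by linarith))
    linarith
  · have h2 : 0 ≤ ∑ x ∈ X, c x * (Real.exp x * x) := by
      refine hlim _ (∑ x ∈ X, c x * 1) 1 one_pos fun N => ?_
      have := hintg N 1
      rwa [phi_int_one X c _ b (hX' N) hs, ← one_mul (a - (N : ℝ))] at this
    rw [← hsig] at h2
    rw [SL_H1 p hp, SL_H1 q hq]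
    linarith
  · by_contra hcon
    have := hpos α (by linarith) h1.ne'
    have h3 : (∑ x ∈ X, c x * Real.exp (α * x)) / (α * (α - 1)) < 0 :=
      div_neg_of_neg_of_pos (by linarith [hfA α]) (mul_pos (by linarith) (by linarith))
    linarith
  · have h2 := hph a
    rw [phi_low X c a (fun x hx => (hX x hx).1) hs] at h2
    have : (supp0 p : ℝ) ≤ supp0 q := by linarith
    exact_mod_cast this
  · have hs0 : ∑ x ∈ X, c x * 1 = 0 := by rw [← hsu, he, sub_self]
    refine ⟨?_, fun α hα => ?_⟩
    · have := hintg 0 0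
      rw [phi_int_zero X c _ b (hX' 0) hs hs0] at this
      rw [SL_H0, SL_H0]
      have h3 := hsig (fun x => x)
      linarith
    · by_contra hcon
      have := hintg 0 α
      rw [phi_int_ne X c _ b α hα.ne (by linarith) (hX' 0) hs, hs0] at this
      have h3 : (∑ x ∈ X, c x * Real.exp (α * x)) / (α * (α - 1)) < 0 :=
        div_neg_of_neg_of_pos (by linarith [hfA α]) (mul_pos_of_neg_of_neg hα (by linarith))
      simp only [zero_mul, zero_div, add_zero] at this
      linarith

lemma fA_kron {ι κ : Type*} [Fintype ι] [Fintype κ] (p : ι → ℝ) (r : κ → ℝ)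
    (hp : ∀ i, 0 ≤ p i) (hr : ∀ i, 0 ≤ r i) (α : ℝ) :
    fA α (kron p r) = fA α p * fA α r := by
  unfold fA kron
  rw [Finset.sum_mul_sum, Fintype.sum_prod_type]
  refine Finset.sum_congr rfl fun i _ => Finset.sum_congr rfl fun j _ => ?_
  by_cases h1 : p i = 0
  · simp [h1]
  by_cases h2 : r j = 0
  · simp [h2]
  simp [h1, h2, Real.mul_rpow (hp i) (hr j)]

lemma supp0_kron {ι κ : Type*} [Fintype ι] [Fintype κ] (p : ι → ℝ) (r : κ → ℝ) :
    supp0 (kron p r) = supp0 p * supp0 r := by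
  have : (supp0 (kron p r) : ℝ) = supp0 p * supp0 r := by
    rw [SL_supp, SL_supp, SL_supp]
    unfold SL kron
    rw [Finset.sum_mul_sum, Fintype.sum_prod_type]
    refine Finset.sum_congr rfl fun i _ => Finset.sum_congr rfl fun j _ => ?_
    by_cases h1 : p i = 0
    · simp [h1]
    by_cases h2 : r j = 0
    · simp [h2]
    simp [h1, h2]
  exact_mod_cast this

lemma H0_kron {ι κ : Type*} [Fintype ι] [Fintype κ] (p : ι → ℝ) (r : κ → ℝ) :
    H0' (kron p r) = H0' p * supp0 r + supp0 p * H0' r := by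
  rw [SL_supp, SL_supp]
  unfold H0' SL kron
  rw [Finset.sum_mul_sum, Finset.sum_mul_sum, Fintype.sum_prod_type, ← Finset.sum_add_distrib]
  refine Finset.sum_congr rfl fun i _ => ?_
  rw [← Finset.sum_add_distrib]
  refine Finset.sum_congr rfl fun j _ => ?_
  by_cases h1 : p i = 0
  · simp [h1]
  by_cases h2 : r j = 0
  · simp [h2]
  simp [h1, h2, Real.log_mul]

lemma H1_kron {ι κ : Type*} [Fintype ι] [Fintype κ] (p : ι → ℝ) (r : κ → ℝ) :
    H1ent (kron p r) = H1ent p * (∑ j, r j) + (∑ i, p i) * H1ent r := by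
  unfold H1ent kron
  rw [neg_mul, mul_neg, ← neg_add, Finset.sum_mul_sum, Finset.sum_mul_sum, Fintype.sum_prod_type,
    ← Finset.sum_add_distrib]
  congr 1
  refine Finset.sum_congr rfl fun i _ => ?_
  rw [← Finset.sum_add_distrib]
  refine Finset.sum_congr rfl fun j _ => ?_
  by_cases h1 : p i = 0
  · simp [h1]
  by_cases h2 : r j = 0
  · simp [h2]
  simp only [Real.log_mul h1 h2]
  ring

lemma probVec_exists_ne {ρ : ℕ} (r : Fin ρ → ℝ) (hr : IsProbVec r) : ∃ i, r i ≠ 0 := by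
  by_contra! hcon
  have := hr.2
  simp [hcon] at this

lemma fA_pos {ρ : ℕ} (r : Fin ρ → ℝ) (hr : IsProbVec r) (α : ℝ) : 0 < fA α r := by
  obtain ⟨i, hi⟩ := probVec_exists_ne r hr
  unfold fA
  refine Finset.sum_pos' (fun j _ => ?_) ⟨i, Finset.mem_univ _, ?_⟩
  · split_ifs
    · exact le_rfl
    · exact Real.rpow_nonneg (hr.1 j) _
  · rw [if_neg hi]
    exact Real.rpow_pos_of_pos (lt_of_le_of_ne (hr.1 i) hi.symm) _

lemma supp0_pos {ρ : ℕ} (r : Fin ρ → ℝ) (hr : IsProbVec r) : 0 < supp0 r := by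
  obtain ⟨i, hi⟩ := probVec_exists_ne r hr
  unfold supp0
  exact Finset.card_pos.2 ⟨i, by simp [hi]⟩

end KlimeshProof

/-- **Klimesh's theorem, reformulated.**  Strict inequalities between the
monotones `f_α`, the Shannon entropy `H₁`, the support size `‖·‖₀` and `H₀'`
imply exact catalytic majorization, and conversely catalytic majorization
implies the non-strict inequalities. -/
theorem klimesh_reformulated
    {m m' : ℕ} (p : Fin m → ℝ) (q : Fin m' → ℝ)
    (hp : IsProbVec p) (hq : IsProbVec q) :
    (((∀ α : ℝ, 0 < α → α < 1 → fA α p < fA α q) ∧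
      H1ent p < H1ent q ∧
      (∀ α : ℝ, 1 < α → fA α q < fA α p) ∧
      (supp0 p < supp0 q ∨
        (supp0 p = supp0 q ∧ H0' p < H0' q ∧
          ∀ α : ℝ, α < 0 → fA α q < fA α p))) →
      ∃ (ρ : ℕ) (r : Fin ρ → ℝ), IsProbVec r ∧
        Majorizes (kron p r) (kron q r)) ∧
    ((∃ (ρ : ℕ) (r : Fin ρ → ℝ), IsProbVec r ∧
        Majorizes (kron p r) (kron q r)) →
      (∀ α : ℝ, 0 < α → α < 1 → fA α p ≤ fA α q) ∧
      H1ent p ≤ H1ent q ∧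
      (∀ α : ℝ, 1 < α → fA α q ≤ fA α p) ∧
      supp0 p ≤ supp0 q ∧
      (supp0 p = supp0 q → H0' p ≤ H0' q ∧
        ∀ α : ℝ, α < 0 → fA α q ≤ fA α p)) := by
  constructor
  · rintro ⟨h01, hH, h1, hd⟩
    obtain ⟨X, c, hnz, hsig⟩ := exists_signed p q
    refine catalyst p q hp hq X c hsig ?_
    have hfA : ∀ α, fA α p - fA α q = ∑ x ∈ X, c x * Real.exp (α * x) := fun α => by
      rw [SL_fA p hp.1, SL_fA q hq.1, hsig]
    have hsu : (supp0 p : ℝ) - supp0 q = ∑ x ∈ X, c x * 1 := by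
      rw [SL_supp, SL_supp, hsig]
    have hs : ∑ x ∈ X, c x * Real.exp x = 0 := by
      rw [← hsig, ← SL_sum p hp.1, ← SL_sum q hq.1, hp.2, hq.2, sub_self]
    have hH' : 0 < ∑ x ∈ X, c x * (Real.exp x * x) := by
      rw [← hsig]
      rw [SL_H1 p hp.1, SL_H1 q hq.1] at hH
      linarith
    have g1 : ∀ α : ℝ, 1 < α → 0 < ∑ x ∈ X, c x * Real.exp (α * x) := fun α hα => by
      rw [← hfA]; linarith [h1 α hα]
    have g01 : ∀ α : ℝ, 0 < α → α < 1 → ∑ x ∈ X, c x * Real.exp (α * x) < 0 := fun α h0 hα => by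
      rw [← hfA]; linarith [h01 α h0 hα]
    rcases hd with hlt | ⟨heq, hH0, hneg⟩
    · refine case_lt X c hnz hs g1 g01 hH' ?_
      rw [← hsu]
      have : (supp0 p : ℝ) < supp0 q := by exact_mod_cast hlt
      linarith
    · refine case_eq X c hnz hs g1 g01 hH' ?_ ?_ ?_
      · rw [← hsu, heq, sub_self]
      · rw [← hsig (fun x => x), ← SL_H0, ← SL_H0]; linarith
      · intro α hα
        rw [← hfA]; linarith [hneg α hα]
  · rintro ⟨ρ, r, hr, hm⟩
    obtain ⟨c01, cH, c1, cs, ce⟩ := conv _ _ (kron_nonneg p r hp.1 hr.1)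
      (kron_nonneg q r hq.1 hr.1) hm
    have hs := supp0_pos r hr
    have hs' : (0 : ℝ) < supp0 r := by exact_mod_cast hs
    simp only [fA_kron p r hp.1 hr.1, fA_kron q r hq.1 hr.1, H1_kron, H0_kron, supp0_kron,
      hp.2, hq.2, hr.2] at c01 cH c1 cs ce
    refine ⟨fun α h0 hα => le_of_mul_le_mul_right (c01 α h0 hα) (fA_pos r hr α), by linarith,
      fun α hα => le_of_mul_le_mul_right (c1 α hα) (fA_pos r hr α),
      Nat.le_of_mul_le_mul_right cs hs, fun he => ?_⟩
    rw [he] at ce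
    obtain ⟨e1, e2⟩ := ce rfl
    exact ⟨le_of_mul_le_mul_right (by linarith) hs',
      fun α hα => le_of_mul_le_mul_right (e2 α hα) (fA_pos r hr α)⟩
end
end

section
/- Let p and q be finite probability vectors and let n ≥ 1 be such that p^{⊗n} majorizes q^{⊗n}. Define r := (1/n) · ⨁_{j=1}^{n} ( p^{⊗(n−j)} ⊗ q^{⊗(j−1)} ). Then r is a finite probability vector and p ⊗ r majorizes q ⊗ r. -/
open scoped BigOperators NNReal

noncomputable section

/-- Set-wise domination: every finite partial sum of `q` is bounded by a partial sum of `p`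
over at most as many indices. -/
def Dom {ι κ : Type*} (p : ι → ℝ) (q : κ → ℝ) : Prop :=
  ∀ s : Finset κ, ∃ t : Finset ι, t.card ≤ s.card ∧ ∑ i ∈ s, q i ≤ ∑ i ∈ t, p i

lemma le_topSum {ι : Type*} [Fintype ι] (p : ι → ℝ) (k : ℕ) (s : Finset ι) (h : s.card ≤ k) :
    ∑ i ∈ s, p i ≤ topSum p k := by
  unfold topSum
  refine le_trans ?_ (le_ciSup (Set.finite_range _).bddAbove s)
  have h' : s ∈ {s : Finset ι | s.card ≤ k} := h
  rw [ciSup_pos h']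

lemma topSum_attained {ι : Type*} [Fintype ι] (p : ι → ℝ) (k : ℕ) :
    ∃ t : Finset ι, t.card ≤ k ∧ topSum p k = ∑ i ∈ t, p i := by
  obtain ⟨t, ht⟩ := exists_eq_ciSup_of_finite
    (f := fun s : Finset ι => ⨆ (_ : s ∈ {s : Finset ι | s.card ≤ k}), ∑ i ∈ s, p i)
  by_cases h : t ∈ {s : Finset ι | s.card ≤ k}
  · refine ⟨t, h, ?_⟩
    unfold topSum
    rw [← ht]
    exact ciSup_pos h
  · refine ⟨∅, by simp, ?_⟩
    unfold topSum
    rw [← ht]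
    haveI : IsEmpty (t ∈ {s : Finset ι | s.card ≤ k}) := ⟨h⟩
    simp only [Finset.sum_empty]
    exact Real.iSup_of_isEmpty _

lemma dom_iff {ι κ : Type*} [Fintype ι] [Fintype κ] (p : ι → ℝ) (q : κ → ℝ) :
    Dom p q ↔ ∀ k, topSum q k ≤ topSum p k := by
  constructor
  · intro h k
    obtain ⟨s, hs, he⟩ := topSum_attained q k
    obtain ⟨t, ht, hl⟩ := h s
    rw [he]
    exact hl.trans (le_topSum p k t (ht.trans hs))
  · intro h s
    obtain ⟨t, ht, he⟩ := topSum_attained p s.card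
    exact ⟨t, ht, he ▸ (le_topSum q _ s le_rfl).trans (h _)⟩

lemma Dom.trans' {ι κ μ : Type*} {p : ι → ℝ} {q : κ → ℝ} {r : μ → ℝ}
    (h : Dom p q) (h' : Dom q r) : Dom p r := by
  intro s
  obtain ⟨t, ht, hl⟩ := h' s
  obtain ⟨u, hu, hl'⟩ := h t
  exact ⟨u, hu.trans ht, hl.trans hl'⟩

lemma Dom.of_equiv {ι κ : Type*} {p : ι → ℝ} {q : κ → ℝ} (e : κ ≃ ι)
    (h : ∀ j, p (e j) = q j) : Dom p q := by
  intro s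
  refine ⟨s.map e.toEmbedding, by simp, ?_⟩
  simp [h]

lemma Dom.smul' {ι κ : Type*} {p : ι → ℝ} {q : κ → ℝ} (c : ℝ) (hc : 0 ≤ c) (h : Dom p q) :
    Dom (fun i => c * p i) (fun i => c * q i) := by
  intro s
  obtain ⟨t, ht, hl⟩ := h s
  refine ⟨t, ht, ?_⟩
  rw [← Finset.mul_sum, ← Finset.mul_sum]
  exact mul_le_mul_of_nonneg_left hl hc

lemma Dom.sigma' {S : Type*} [Fintype S] {A B : S → Type*}
    {p : (Σ s, A s) → ℝ} {q : (Σ s, B s) → ℝ}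
    (h : ∀ s, Dom (fun a => p ⟨s, a⟩) (fun b => q ⟨s, b⟩)) : Dom p q := by
  classical
  intro F
  let G : ∀ s, Finset (B s) := fun s => F.preimage (Sigma.mk s) (sigma_mk_injective.injOn)
  have hF : F = Finset.univ.sigma G := by
    ext ⟨s, b⟩
    simp [G]
  choose t ht hl using fun s => h s (G s)
  refine ⟨Finset.univ.sigma t, ?_, ?_⟩
  · rw [hF, Finset.card_sigma, Finset.card_sigma]
    exact Finset.sum_le_sum fun s _ => ht s
  · rw [hF, Finset.sum_sigma, Finset.sum_sigma]
    exact Finset.sum_le_sum fun s _ => hl s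

lemma Dom.sigma_perm {S : Type*} [Fintype S] {A B : S → Type*}
    {p : (Σ s, A s) → ℝ} {q : (Σ s, B s) → ℝ} (σ : Equiv.Perm S)
    (h : ∀ s, Dom (fun a => p ⟨σ s, a⟩) (fun b => q ⟨s, b⟩)) : Dom p q := by
  refine Dom.trans' (q := fun x : (Σ s, A (σ s)) => p ⟨σ x.1, x.2⟩) ?_ (Dom.sigma' h)
  exact Dom.of_equiv (Equiv.sigmaCongrLeft (β := A) σ) (fun j => rfl)

lemma kpow_cons {ι : Type*} (p : ι → ℝ) (n : ℕ) (i : ι) (f : Fin n → ι) :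
    kpow p (n + 1) (Fin.cons i f : Fin (n + 1) → ι) = p i * kpow p n f := by
  simp [kpow, Fin.prod_univ_succ]

lemma kpow_sum {ι : Type*} [Fintype ι] (p : ι → ℝ) (n : ℕ) (hp : ∑ i, p i = 1) :
    ∑ f, kpow p n f = 1 := by
  unfold kpow
  rw [← Fintype.sum_pow, hp, one_pow]

lemma kpow_nonneg {ι : Type*} (p : ι → ℝ) (n : ℕ) (hp : ∀ i, 0 ≤ p i) (f : Fin n → ι) :
    0 ≤ kpow p n f := Finset.prod_nonneg fun _ _ => hp _

/-- The middle pieces agree up to reindexing. -/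
lemma dom_mid {ι κ : Type*} (p : ι → ℝ) (q : κ → ℝ) (c : ℝ) (a a' b b' : ℕ)
    (ha : a' = a + 1) (hb : b' = b + 1) :
    Dom (fun x : ι × ((Fin a → ι) × (Fin b' → κ)) => p x.1 * (c * (kpow p a x.2.1 * kpow q b' x.2.2)))
      (fun x : κ × ((Fin a' → ι) × (Fin b → κ)) =>
        q x.1 * (c * (kpow p a' x.2.1 * kpow q b x.2.2))) := by
  subst ha hb
  let e : ι × ((Fin a → ι) × (Fin (b + 1) → κ)) ≃ κ × ((Fin (a + 1) → ι) × (Fin b → κ)) :=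
    { toFun := fun x => (x.2.2 0, (Fin.cons x.1 x.2.1, Fin.tail x.2.2))
      invFun := fun x => (x.2.1 0, (Fin.tail x.2.1, Fin.cons x.1 x.2.2))
      left_inv := fun x => by simp [Fin.cons_self_tail]
      right_inv := fun x => by simp [Fin.cons_self_tail] }
  refine Dom.of_equiv e.symm ?_
  intro x
  obtain ⟨y, rfl⟩ := e.surjective x
  rw [Equiv.symm_apply_apply]
  obtain ⟨i, f, g⟩ := y
  change p i * (c * (kpow p a f * kpow q (b + 1) g)) =
    q (g 0) * (c * (kpow p (a + 1) (Fin.cons i f : Fin (a + 1) → ι) * kpow q b (Fin.tail g)))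
  rw [kpow_cons]
  conv_lhs => rw [← Fin.cons_self_tail g, kpow_cons]
  ring

lemma dom_pow_left {ι κ : Type*} (p : ι → ℝ) (q : κ → ℝ) (c : ℝ) (N b a : ℕ) (hb : b = 0)
    (ha : a = N) :
    Dom (fun x : ι × ((Fin a → ι) × (Fin b → κ)) => p x.1 * (c * (kpow p a x.2.1 * kpow q b x.2.2)))
      (fun f => c * kpow p (N + 1) f) := by
  subst hb ha
  let e : (Fin (a + 1) → ι) ≃ ι × ((Fin a → ι) × (Fin 0 → κ)) :=
    { toFun := fun f => (f 0, (Fin.tail f, Fin.elim0))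
      invFun := fun x => Fin.cons x.1 x.2.1
      left_inv := fun x => by simp [Fin.cons_self_tail]
      right_inv := fun x => by
        ext <;> simp [Subsingleton.elim Fin.elim0 x.2.2] }
  refine Dom.of_equiv e ?_
  intro f
  change p (f 0) * (c * (kpow p a (Fin.tail f) * kpow q 0 Fin.elim0)) = _
  conv_rhs => rw [← Fin.cons_self_tail f, kpow_cons]
  simp [kpow]
  ring

lemma dom_pow_right {ι κ : Type*} (p : ι → ℝ) (q : κ → ℝ) (c : ℝ) (N a b : ℕ) (ha : a = 0)
    (hb : b = N) :
    Dom (fun f => c * kpow q (N + 1) f)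
      (fun x : κ × ((Fin a → ι) × (Fin b → κ)) =>
        q x.1 * (c * (kpow p a x.2.1 * kpow q b x.2.2))) := by
  subst ha hb
  let e : κ × ((Fin 0 → ι) × (Fin b → κ)) ≃ (Fin (b + 1) → κ) :=
    { toFun := fun x => Fin.cons x.1 x.2.2
      invFun := fun f => (f 0, (Fin.elim0, Fin.tail f))
      left_inv := fun x => by
        ext <;> simp [Subsingleton.elim Fin.elim0 x.2.1]
      right_inv := fun x => by simp [Fin.cons_self_tail] }
  refine Dom.of_equiv e ?_
  rintro ⟨i, f, g⟩
  change c * kpow q (b + 1) (Fin.cons i g : Fin (b + 1) → κ) = _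
  rw [kpow_cons]
  simp [kpow]
  ring

lemma isProbVec_trick {m m' : ℕ} (p : Fin m → ℝ) (q : Fin m' → ℝ)
    (hp : IsProbVec p) (hq : IsProbVec q) (n : ℕ) (hn : 1 ≤ n) : IsProbVec (trick p q n) := by
  refine ⟨fun x => ?_, ?_⟩
  · exact mul_nonneg (by positivity)
      (mul_nonneg (kpow_nonneg p _ hp.1 _) (kpow_nonneg q _ hq.1 _))
  · have hn' : (n : ℝ) ≠ 0 := by positivity
    unfold trick
    rw [← Finset.mul_sum, Fintype.sum_sigma]
    simp only [Fintype.sum_prod_type, ← Finset.mul_sum, ← Finset.sum_mul,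
      kpow_sum _ _ hp.2, kpow_sum _ _ hq.2]
    simp [hn']

lemma dom_kron_trick {m m' : ℕ} (p : Fin m → ℝ) (q : Fin m' → ℝ) (N : ℕ)
    (h : Dom (kpow p (N + 1)) (kpow q (N + 1))) :
    Dom (kron p (trick p q (N + 1))) (kron q (trick p q (N + 1))) := by
  let A : Fin (N + 1) → Type := fun s => (Fin (N + 1 - 1 - (s : ℕ)) → Fin m) × (Fin (s : ℕ) → Fin m')
  let c : ℝ := 1 / ((N + 1 : ℕ) : ℝ)
  have hc : 0 ≤ c := by positivity
  let P : (Σ s : Fin (N + 1), Fin m × A s) → ℝ := fun x =>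
    p x.2.1 * (c * (kpow p (N + 1 - 1 - (x.1 : ℕ)) x.2.2.1 * kpow q (x.1 : ℕ) x.2.2.2))
  let Q : (Σ s : Fin (N + 1), Fin m' × A s) → ℝ := fun x =>
    q x.2.1 * (c * (kpow p (N + 1 - 1 - (x.1 : ℕ)) x.2.2.1 * kpow q (x.1 : ℕ) x.2.2.2))
  have h1 : Dom (kron p (trick p q (N + 1))) P :=
    Dom.of_equiv
      { toFun := fun x => (x.2.1, ⟨x.1, x.2.2⟩)
        invFun := fun x => ⟨x.2.1, (x.1, x.2.2)⟩
        left_inv := fun x => rfl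
        right_inv := fun x => rfl } (fun x => rfl)
  have h2 : Dom Q (kron q (trick p q (N + 1))) :=
    Dom.of_equiv
      { toFun := fun x => ⟨x.2.1, (x.1, x.2.2)⟩
        invFun := fun x => (x.2.1, ⟨x.1, x.2.2⟩)
        left_inv := fun x => rfl
        right_inv := fun x => rfl } (fun x => rfl)
  refine h1.trans' (Dom.trans' ?_ h2)
  refine Dom.sigma_perm (finRotate (N + 1)) ?_
  intro s
  by_cases hs : s = Fin.last N
  · subst hs
    have e : ((finRotate (N + 1) (Fin.last N) : Fin (N + 1)) : ℕ) = 0 := by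
      rw [finRotate_last]; rfl
    exact ((dom_pow_left p q c N _ _ e (by rw [e]; rfl)).trans' (h.smul' c hc)).trans'
      (dom_pow_right p q c N _ _ (by simp) (by simp))
  · have e : ((finRotate (N + 1) s : Fin (N + 1)) : ℕ) = s + 1 :=
      coe_finRotate_of_ne_last hs
    have hlt : (s : ℕ) < N := by
      have := Fin.val_lt_last hs
      simpa using this
    exact dom_mid p q c _ _ _ _ (by rw [e]; omega) e

/-- **From asymptotic to catalytic majorization.**  If `p^{⊗n}` majorizes
`q^{⊗n}`, then `r = (1/n) ⨁_{j=1}^{n} p^{⊗(n-j)} ⊗ q^{⊗(j-1)}` is a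
probability vector and `p ⊗ r` majorizes `q ⊗ r`. -/
theorem asymptotic_implies_catalytic
    {m m' : ℕ} (p : Fin m → ℝ) (q : Fin m' → ℝ)
    (hp : IsProbVec p) (hq : IsProbVec q)
    (n : ℕ) (hn : 1 ≤ n)
    (hmaj : Majorizes (kpow p n) (kpow q n)) :
    IsProbVec (trick p q n) ∧
      Majorizes (kron p (trick p q n)) (kron q (trick p q n)) := by
  have hr := isProbVec_trick p q hp hq n hn
  refine ⟨hr, ?_, ?_⟩
  · simp only [kron, Fintype.sum_prod_type, ← Finset.mul_sum, ← Finset.sum_mul, hr.2, hp.2, hq.2]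
  · obtain ⟨N, rfl⟩ : ∃ N, n = N + 1 := ⟨n - 1, by omega⟩
    exact (dom_iff _ _).1 (dom_kron_trick p q N ((dom_iff _ _).2 hmaj.2))
end
end
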